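/- arXiv:math/0505154 — 3 statements merged into one kernel-verified Lean document; each statement's English description precedes it below -/
import Mathlib

section
/- (Weak commutant lifting, Lemma 2.1) Let A, B be commuting contractions on H and let X̃ ∈ B(K̃) be a co-isometric extension of A, where K̃ ⊇ H. Then there exists a Hilbert space K ⊇ K̃ and commuting co-isometries X, Y ∈ B(K) such that X extends X̃ and Y extends B. -/
open ContinuousLinearMap

/-- Data witnessing the conclusion of the weak commutant lifting lemma: a Hilbert
space `K ⊇ K̃` with commuting co-isometries `X, Y` such that `X` extends `X̃` and
`Y` extends `B`. -/
structure CommutantLift {H Kt : Type}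
    [NormedAddCommGroup H] [InnerProductSpace ℂ H] [CompleteSpace H]
    [NormedAddCommGroup Kt] [InnerProductSpace ℂ Kt] [CompleteSpace Kt]
    (B : H →L[ℂ] H) (e : H →ₗᵢ[ℂ] Kt) (Xt : Kt →L[ℂ] Kt) where
  K : Type
  [grp : NormedAddCommGroup K]
  [ips : InnerProductSpace ℂ K]
  [cpl : CompleteSpace K]
  emb : Kt →ₗᵢ[ℂ] K
  X : K →L[ℂ] K
  Y : K →L[ℂ] K
  X_coisometry : X ∘L ContinuousLinearMap.adjoint X = 1
  Y_coisometry : Y ∘L ContinuousLinearMap.adjoint Y = 1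
  commute : X ∘L Y = Y ∘L X
  X_extends : ∀ z : Kt, X (emb z) = emb (Xt z)
  Y_extends : ∀ x : H, Y (emb (e x)) = emb (e (B x))

open scoped InnerProductSpace

theorem wcl_ext {S E F : Type} [AddCommGroup S] [Module ℂ S]
    [NormedAddCommGroup E] [InnerProductSpace ℂ E] [CompleteSpace E]
    [NormedAddCommGroup F] [InnerProductSpace ℂ F]
    (p : S →ₗ[ℂ] E) (f g : E →L[ℂ] F) (h1 : ∀ s, f (p s) = g (p s))
    (h2 : ∀ z, (∀ s, ⟪p s, z⟫_ℂ = 0) → f z = g z) : f = g := by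
  let M : Submodule ℂ E := (LinearMap.range p).topologicalClosure
  have : CompleteSpace M := (Submodule.isClosed_topologicalClosure _).completeSpace_coe
  have hM : ∀ x ∈ M, f x = g x := by
    intro x hx
    have : IsClosed {x | f x = g x} := isClosed_eq f.continuous g.continuous
    refine closure_minimal ?_ this hx
    rintro _ ⟨s, rfl⟩
    exact h1 s
  ext z
  obtain ⟨a, ha, b, hb, rfl⟩ := M.exists_add_mem_mem_orthogonal z
  rw [map_add, map_add, hM a ha, h2 b]
  intro s
  exact (Submodule.mem_orthogonal _ _).1 hb _ (Submodule.le_topologicalClosure _ ⟨s, rfl⟩)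

theorem wcl_partial {S E F : Type} [AddCommGroup S] [Module ℂ S]
    [NormedAddCommGroup E] [InnerProductSpace ℂ E] [CompleteSpace E]
    [NormedAddCommGroup F] [InnerProductSpace ℂ F] [CompleteSpace F]
    (p : S →ₗ[ℂ] E) (q : S →ₗ[ℂ] F) (hpq : ∀ s, ‖q s‖ = ‖p s‖) :
    ∃ C : E →L[ℂ] F, (∀ s, C (p s) = q s) ∧ (∀ z, (∀ s, ⟪p s, z⟫_ℂ = 0) → C z = 0) ∧
      (∀ s, ContinuousLinearMap.adjoint C (q s) = p s) := by
  let M : Submodule ℂ E := (LinearMap.range p).topologicalClosure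
  have : CompleteSpace M := (Submodule.isClosed_topologicalClosure _).completeSpace_coe
  have hmem : ∀ s, p s ∈ M := fun s => Submodule.le_topologicalClosure _ ⟨s, rfl⟩
  let p' : S →ₗ[ℂ] M := p.codRestrict M hmem
  have hd : DenseRange p' := by
    intro x
    rw [closure_subtype]
    have : (Subtype.val '' Set.range p') = (LinearMap.range p : Set E) := by
      ext y; simp [p']
    rw [this]
    exact x.2
  have hn : ∀ x, ‖q x‖ ≤ 1 * ‖p' x‖ := fun x => by
    rw [one_mul, hpq]; exact le_rfl
  let C0 : M →L[ℂ] F := q.extendOfNorm p'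
  let C : E →L[ℂ] F := C0 ∘L M.orthogonalProjectionOnto
  have hC1 : ∀ s, C (p s) = q s := by
    intro s
    have h : M.orthogonalProjectionOnto (p s) = p' s :=
      Submodule.orthogonalProjectionOnto_mem_subspace_eq_self (p' s)
    change C0 (M.orthogonalProjectionOnto (p s)) = q s
    rw [h]
    exact LinearMap.extendOfNorm_eq hd ⟨1, hn⟩ s
  have hC2 : ∀ z, (∀ s, ⟪p s, z⟫_ℂ = 0) → C z = 0 := by
    intro z hz
    have h : z ∈ Mᗮ := by
      rw [Submodule.orthogonal_closure, Submodule.mem_orthogonal]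
      rintro _ ⟨s, rfl⟩
      exact hz s
    change C0 (M.orthogonalProjectionOnto z) = 0
    rw [Submodule.orthogonalProjectionOnto_eq_zero_iff.2 h, map_zero]
  refine ⟨C, hC1, hC2, fun s => ?_⟩
  have hin : ∀ s t, ⟪q s, q t⟫_ℂ = ⟪p s, p t⟫_ℂ := by
    intro s t
    rw [inner_eq_sum_norm_sq_div_four, inner_eq_sum_norm_sq_div_four]
    simp only [← map_smul, ← map_add, ← map_sub, hpq]
  have := wcl_ext p (innerSL ℂ (q s) ∘L C) (innerSL ℂ (p s))
    (fun t => by simp [hC1, hin]) (fun z hz => by simp [hC2 z hz, hz s])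
  apply ext_inner_right ℂ
  intro z
  rw [ContinuousLinearMap.adjoint_inner_left]
  exact congrArg (fun f => f z) this

theorem wcl_defect {H : Type} [NormedAddCommGroup H] [InnerProductSpace ℂ H] [CompleteSpace H]
    (T : H →L[ℂ] H) (hT : ‖T‖ ≤ 1) :
    ∃ D : H →L[ℂ] H, ∀ h, ‖D h‖ ^ 2 + ‖T h‖ ^ 2 = ‖h‖ ^ 2 := by
  have hpos : (0 : H →L[ℂ] H) ≤ 1 - star T * T := by
    rw [sub_nonneg]
    refine (CStarAlgebra.norm_le_one_iff_of_nonneg _ (star_mul_self_nonneg T)).1 ?_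
    rw [CStarRing.norm_star_mul_self]
    exact mul_le_one₀ hT (norm_nonneg _) hT
  obtain ⟨D, hD⟩ := CStarAlgebra.nonneg_iff_eq_star_mul_self.1 hpos
  refine ⟨D, fun h => ?_⟩
  have h1 : ⟪(star D * D) h, h⟫_ℂ = ⟪D h, D h⟫_ℂ := by
    change ⟪ContinuousLinearMap.adjoint D (D h), h⟫_ℂ = _
    rw [ContinuousLinearMap.adjoint_inner_left]
  have h2 : ⟪(star T * T) h, h⟫_ℂ = ⟪T h, T h⟫_ℂ := by
    change ⟪ContinuousLinearMap.adjoint T (T h), h⟫_ℂ = _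
    rw [ContinuousLinearMap.adjoint_inner_left]
  have h3 : ⟪(1 - star T * T) h, h⟫_ℂ = ⟪h, h⟫_ℂ - ⟪T h, T h⟫_ℂ := by
    rw [← h2, _root_.sub_apply, inner_sub_left]; rfl
  rw [hD, h1] at h3
  simp only [inner_self_eq_norm_sq_to_K] at h3
  have : ‖D h‖ ^ 2 = ‖h‖ ^ 2 - ‖T h‖ ^ 2 := by exact_mod_cast h3
  linarith

noncomputable def wclJulia {E : Type} [NormedAddCommGroup E] [InnerProductSpace ℂ E]
    (C D : E →L[ℂ] E) : WithLp 2 (E × E) →ₗ[ℂ] WithLp 2 (E × E) where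
  toFun x := WithLp.toLp 2 (C x.fst + (x.snd - C (D x.snd)), (x.fst - D (C x.fst)) - D x.snd)
  map_add' x y := by
    apply WithLp.ofLp_injective
    ext <;> simp <;> abel
  map_smul' c x := by
    apply WithLp.ofLp_injective
    ext <;> simp [smul_add, smul_sub]

theorem wclJulia_inv {E : Type} [NormedAddCommGroup E] [InnerProductSpace ℂ E]
    (C D : E →L[ℂ] E) (h1 : ∀ x, C (D (C x)) = C x) (h2 : ∀ x, D (C (D x)) = D x)
    (x : WithLp 2 (E × E)) : wclJulia C D (wclJulia D C x) = x := by
  apply WithLp.ofLp_injective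
  ext <;> simp [wclJulia, h1, h2]

theorem wclJulia_inner {E : Type} [NormedAddCommGroup E] [InnerProductSpace ℂ E] [CompleteSpace E]
    (C : E →L[ℂ] E) (x y : WithLp 2 (E × E)) :
    ⟪wclJulia C (ContinuousLinearMap.adjoint C) x, y⟫_ℂ =
      ⟪x, wclJulia (ContinuousLinearMap.adjoint C) C y⟫_ℂ := by
  simp only [wclJulia, LinearMap.coe_mk, AddHom.coe_mk, WithLp.prod_inner_apply, inner_add_left,
    inner_add_right, inner_sub_left, inner_sub_right, ContinuousLinearMap.adjoint_inner_left,
    ContinuousLinearMap.adjoint_inner_right, WithLp.ofLp_fst, WithLp.ofLp_snd]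
  rw [← ContinuousLinearMap.adjoint_inner_right C (ContinuousLinearMap.adjoint C x.snd),
    ContinuousLinearMap.adjoint_inner_left]
  ring

theorem wcl_julia {E : Type} [NormedAddCommGroup E] [InnerProductSpace ℂ E] [CompleteSpace E]
    (C : E →L[ℂ] E) (hC : ∀ x, C (ContinuousLinearMap.adjoint C (C x)) = C x) :
    ∃ U : WithLp 2 (E × E) ≃ₗᵢ[ℂ] WithLp 2 (E × E),
      ∀ x, ContinuousLinearMap.adjoint C (C x) = x →
        U (WithLp.toLp 2 (x, 0)) = WithLp.toLp 2 (C x, 0) := by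
  have hC' : ∀ x, ContinuousLinearMap.adjoint C (C (ContinuousLinearMap.adjoint C x)) =
      ContinuousLinearMap.adjoint C x := by
    intro x
    apply ext_inner_right ℂ
    intro z
    simp only [ContinuousLinearMap.adjoint_inner_left]
    rw [← ContinuousLinearMap.adjoint_inner_right, ContinuousLinearMap.adjoint_inner_left, hC]
  refine ⟨⟨LinearEquiv.ofLinearMap (wclJulia C (ContinuousLinearMap.adjoint C))
    (wclJulia (ContinuousLinearMap.adjoint C) C)
    (LinearMap.ext fun x => wclJulia_inv _ _ hC hC' x)
    (LinearMap.ext fun x => wclJulia_inv _ _ hC' hC x), fun x => ?_⟩, fun x hx => ?_⟩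
  · change ‖wclJulia C (ContinuousLinearMap.adjoint C) x‖ = ‖x‖
    rw [@norm_eq_sqrt_re_inner ℂ, @norm_eq_sqrt_re_inner ℂ _ _ _ _ x, wclJulia_inner,
      wclJulia_inv _ _ hC' hC]
  · change wclJulia C (ContinuousLinearMap.adjoint C) (WithLp.toLp 2 (x, 0)) = _
    simp [wclJulia, hx]

theorem wcl_lp_hasSum {E : Type} [NormedAddCommGroup E] (x : lp (fun _ : ℕ => E) 2) :
    HasSum (fun n => ‖x n‖ ^ 2) (‖x‖ ^ 2) := by
  have := lp.hasSum_norm (p := 2) (by norm_num) x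
  simpa using this

/-- The sequence part of the isometric lift. -/
def wclSeq {H E : Type} [NormedAddCommGroup H] [NormedSpace ℂ H] [NormedAddCommGroup E]
    [NormedSpace ℂ E] (b : H →ₗ[ℂ] E) (R Q : E →ₗ[ℂ] E) (h : H) (x : ℕ → E) : ℕ → E
  | 0 => R (x 0) + b h
  | n + 1 => R (x (n + 1)) + Q (x n)

theorem wclSeq_add {H E : Type} [NormedAddCommGroup H] [NormedSpace ℂ H] [NormedAddCommGroup E]
    [NormedSpace ℂ E] (b : H →ₗ[ℂ] E) (R Q : E →ₗ[ℂ] E) (h h' : H) (x x' : ℕ → E) :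
    wclSeq b R Q (h + h') (x + x') = wclSeq b R Q h x + wclSeq b R Q h' x' := by
  funext n
  cases n with
  | zero => simp only [wclSeq, Pi.add_apply, map_add]; abel
  | succ k => simp only [wclSeq, Pi.add_apply, map_add]; abel

theorem wclSeq_smul {H E : Type} [NormedAddCommGroup H] [NormedSpace ℂ H] [NormedAddCommGroup E]
    [NormedSpace ℂ E] (b : H →ₗ[ℂ] E) (R Q : E →ₗ[ℂ] E) (c : ℂ) (h : H) (x : ℕ → E) :
    wclSeq b R Q (c • h) (c • x) = c • wclSeq b R Q h x := by
  funext n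
  cases n with
  | zero => simp only [wclSeq, Pi.smul_apply, map_smul, smul_add]
  | succ k => simp only [wclSeq, Pi.smul_apply, map_smul, smul_add]

theorem wclSeq_hasSum {H E : Type} [NormedAddCommGroup H] [NormedSpace ℂ H] [NormedAddCommGroup E]
    [NormedSpace ℂ E] (b : H →ₗ[ℂ] E) (R Q : E →ₗ[ℂ] E)
    (hRQ : ∀ x y, ‖R x + Q y‖ ^ 2 = ‖R x‖ ^ 2 + ‖Q y‖ ^ 2)
    (hRQ' : ∀ x, ‖R x‖ ^ 2 + ‖Q x‖ ^ 2 = ‖x‖ ^ 2)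
    (hRb : ∀ x h, ‖R x + b h‖ ^ 2 = ‖R x‖ ^ 2 + ‖b h‖ ^ 2)
    (h : H) (x : ℕ → E) (c : ℝ) (hx : HasSum (fun n => ‖x n‖ ^ 2) c) :
    HasSum (fun n => ‖wclSeq b R Q h x n‖ ^ 2) (c + ‖b h‖ ^ 2) := by
  have hR : Summable (fun n => ‖R (x n)‖ ^ 2) :=
    Summable.of_nonneg_of_le (fun _ => by positivity)
      (fun n => by rw [← hRQ' (x n)]; linarith [sq_nonneg ‖Q (x n)‖]) hx.summable
  have hQ : Summable (fun n => ‖Q (x n)‖ ^ 2) :=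
    Summable.of_nonneg_of_le (fun _ => by positivity)
      (fun n => by rw [← hRQ' (x n)]; linarith [sq_nonneg ‖R (x n)‖]) hx.summable
  obtain ⟨r, hr⟩ := hR
  obtain ⟨q, hq⟩ := hQ
  have hs : r + q = c := by
    refine (hr.add hq).unique ?_
    simpa only [hRQ'] using hx
  let g : ℕ → ℝ := fun n => Nat.casesOn n (‖b h‖ ^ 2) (fun k => ‖Q (x k)‖ ^ 2)
  have hc : HasSum g (g 0 + q) := HasSum.zero_add (f := g) hq
  have := hr.add hc
  have e : r + (g 0 + q) = c + ‖b h‖ ^ 2 := by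
    rw [← hs]
    change r + (‖b h‖ ^ 2 + q) = _
    ring
  rw [e] at this
  refine this.congr_fun ?_
  intro n
  cases n with
  | zero => exact hRb _ _
  | succ k => exact hRQ _ _

theorem wcl_shift {H E : Type} [NormedAddCommGroup H] [InnerProductSpace ℂ H]
    [NormedAddCommGroup E] [InnerProductSpace ℂ E]
    (T : H →ₗ[ℂ] H) (b : H →ₗ[ℂ] E) (R Q : E →ₗ[ℂ] E)
    (hT : ∀ h, ‖b h‖ ^ 2 + ‖T h‖ ^ 2 = ‖h‖ ^ 2)
    (hRQ : ∀ x y, ‖R x + Q y‖ ^ 2 = ‖R x‖ ^ 2 + ‖Q y‖ ^ 2)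
    (hRQ' : ∀ x, ‖R x‖ ^ 2 + ‖Q x‖ ^ 2 = ‖x‖ ^ 2)
    (hRb : ∀ x h, ‖R x + b h‖ ^ 2 = ‖R x‖ ^ 2 + ‖b h‖ ^ 2) :
    ∃ V : WithLp 2 (H × lp (fun _ : ℕ => E) 2) →ₗᵢ[ℂ] WithLp 2 (H × lp (fun _ : ℕ => E) 2),
      ∀ z, (V z).fst = T z.fst ∧ ∀ n, (V z).snd n = wclSeq b R Q z.fst z.snd n := by
  have hmem : ∀ (h : H) (x : lp (fun _ : ℕ => E) 2), Memℓp (wclSeq b R Q h x) 2 := by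
    intro h x
    apply memℓp_gen
    simpa using (wclSeq_hasSum b R Q hRQ hRQ' hRb h x _ (wcl_lp_hasSum x)).summable
  let L : WithLp 2 (H × lp (fun _ : ℕ => E) 2) →ₗ[ℂ] WithLp 2 (H × lp (fun _ : ℕ => E) 2) :=
    { toFun := fun z => WithLp.toLp 2 (T z.fst, ⟨wclSeq b R Q z.fst z.snd, hmem _ _⟩)
      map_add' := by
        intro x y
        apply WithLp.ofLp_injective
        refine Prod.ext (by simp) ?_
        apply lp.ext
        exact wclSeq_add b R Q _ _ _ _
      map_smul' := by
        intro c x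
        apply WithLp.ofLp_injective
        refine Prod.ext (by simp) ?_
        apply lp.ext
        exact wclSeq_smul b R Q _ _ _ }
  refine ⟨⟨L, fun z => ?_⟩, fun z => ⟨rfl, fun n => rfl⟩⟩
  rw [← sq_eq_sq₀ (norm_nonneg _) (norm_nonneg _), WithLp.prod_norm_sq_eq_of_L2,
    WithLp.prod_norm_sq_eq_of_L2]
  have h1 : ‖(L z).snd‖ ^ 2 = ‖z.snd‖ ^ 2 + ‖b z.fst‖ ^ 2 :=
    (wcl_lp_hasSum (L z).snd).unique (wclSeq_hasSum b R Q hRQ hRQ' hRb z.fst z.snd _ (wcl_lp_hasSum _))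
  have h2 : ‖(L z).fst‖ = ‖T z.fst‖ := rfl
  rw [h1, h2, ← hT z.fst]
  ring

theorem wcl_pyth {E : Type} [NormedAddCommGroup E] [InnerProductSpace ℂ E]
    (P : E →ₗ[ℂ] E) (hP : ∀ x, P (P x) = P x) (hs : ∀ x y, ⟪P x, y⟫_ℂ = ⟪x, P y⟫_ℂ) (x y : E) :
    ‖P x + (y - P y)‖ ^ 2 = ‖P x‖ ^ 2 + ‖y - P y‖ ^ 2 := by
  have h : ⟪P x, y - P y⟫_ℂ = 0 := by
    rw [hs, map_sub, hP, sub_self, inner_zero_right]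
  have := norm_add_sq_eq_norm_sq_add_norm_sq_of_inner_eq_zero (𝕜 := ℂ) _ _ h
  simpa only [sq] using this

theorem wcl_ando_abs {H E : Type} [NormedAddCommGroup H] [InnerProductSpace ℂ H]
    [NormedAddCommGroup E] [InnerProductSpace ℂ E]
    (T1 T2 : H →ₗ[ℂ] H) (hT : ∀ h, T1 (T2 h) = T2 (T1 h))
    (b a : H →ₗ[ℂ] E) (hb : ∀ h, ‖b h‖ ^ 2 + ‖T1 h‖ ^ 2 = ‖h‖ ^ 2)
    (ha : ∀ h, ‖a h‖ ^ 2 + ‖T2 h‖ ^ 2 = ‖h‖ ^ 2)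
    (P : E →ₗ[ℂ] E) (hP : ∀ x, P (P x) = P x) (hs : ∀ x y, ⟪P x, y⟫_ℂ = ⟪x, P y⟫_ℂ)
    (hPb : ∀ h, P (b h) = b h) (hPa : ∀ h, P (a h) = 0)
    (U : E ≃ₗᵢ[ℂ] E) (hU : ∀ h, U (b (T2 h) + a h) = b h + a (T1 h)) :
    ∃ V1 V2 : WithLp 2 (H × lp (fun _ : ℕ => E) 2) →ₗᵢ[ℂ] WithLp 2 (H × lp (fun _ : ℕ => E) 2),
      (∀ z, V1 (V2 z) = V2 (V1 z)) ∧ (∀ z, (V1 z).fst = T1 z.fst) ∧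
        (∀ z, (V2 z).fst = T2 z.fst) := by
  have py := wcl_pyth P hP hs
  have py' : ∀ x y, ‖(y - P y) + P x‖ ^ 2 = ‖y - P y‖ ^ 2 + ‖P x‖ ^ 2 := fun x y => by
    rw [add_comm, py, add_comm]
  let Ul : E →ₗ[ℂ] E := U.toLinearEquiv.toLinearMap
  let Ui : E →ₗ[ℂ] E := U.symm.toLinearEquiv.toLinearMap
  let R1 : E →ₗ[ℂ] E := Ul ∘ₗ (LinearMap.id - P)
  let Q1 : E →ₗ[ℂ] E := Ul ∘ₗ P
  let b1 : H →ₗ[ℂ] E := Ul ∘ₗ b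
  let R2 : E →ₗ[ℂ] E := P ∘ₗ Ui
  let Q2 : E →ₗ[ℂ] E := (LinearMap.id - P) ∘ₗ Ui
  have eR1 : ∀ x, R1 x = U (x - P x) := fun x => rfl
  have eQ1 : ∀ x, Q1 x = U (P x) := fun x => rfl
  have eb1 : ∀ x, b1 x = U (b x) := fun x => rfl
  have eR2 : ∀ x, R2 x = P (U.symm x) := fun x => rfl
  have eQ2 : ∀ x, Q2 x = U.symm x - P (U.symm x) := fun x => rfl
  obtain ⟨V1, hV1⟩ := wcl_shift T1 b1 R1 Q1
    (fun h => by rw [eb1, U.norm_map, hb])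
    (fun x y => by rw [eR1, eQ1, ← map_add, U.norm_map, U.norm_map, U.norm_map, py'])
    (fun x => by rw [eR1, eQ1, U.norm_map, U.norm_map, ← py', sub_add_cancel])
    (fun x h => by
      rw [eR1, eb1, ← map_add, U.norm_map, U.norm_map, U.norm_map, ← hPb, py'])
  obtain ⟨V2, hV2⟩ := wcl_shift T2 a R2 Q2 ha
    (fun x y => by rw [eR2, eQ2, py])
    (fun x => by rw [eR2, eQ2, ← py, add_sub_cancel, U.symm.norm_map])
    (fun x h => by
      have := py (U.symm x) (a h)
      rw [hPa, sub_zero] at this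
      rw [eR2, this])
  refine ⟨V1, V2, fun z => ?_, fun z => (hV1 z).1, fun z => (hV2 z).1⟩
  have r12 : ∀ x, R1 (R2 x) = 0 := fun x => by rw [eR1, eR2, hP, sub_self, map_zero]
  have r21 : ∀ x, R2 (R1 x) = 0 := fun x => by
    rw [eR1, eR2, U.symm_apply_apply, map_sub, hP, sub_self]
  have q12 : ∀ x, Q1 (Q2 x) = 0 := fun x => by
    rw [eQ1, eQ2, map_sub, hP, sub_self, map_zero]
  have q21 : ∀ x, Q2 (Q1 x) = 0 := fun x => by
    rw [eQ1, eQ2, U.symm_apply_apply, hP, sub_self]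
  have m12 : ∀ x, R1 (Q2 x) + Q1 (R2 x) = x := fun x => by
    rw [eR1, eQ2, eQ1, eR2, ← map_add]
    simp [hP]
  have m21 : ∀ x, R2 (Q1 x) + Q2 (R1 x) = x := fun x => by
    rw [eR2, eQ1, eQ2, eR1, U.symm_apply_apply, U.symm_apply_apply]
    simp [hP]
  have c1 : ∀ h, R1 (a h) + b1 (T2 h) = R2 (b1 h) + a (T1 h) := fun h => by
    rw [eR1, hPa, sub_zero, eb1, ← map_add, add_comm (a h), hU, eR2, eb1, U.symm_apply_apply, hPb]
  have c2 : ∀ h, Q1 (a h) = 0 := fun h => by rw [eQ1, hPa, map_zero]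
  have c3 : ∀ h, Q2 (b1 h) = 0 := fun h => by
    rw [eQ2, eb1, U.symm_apply_apply, hPb, sub_self]
  apply WithLp.ofLp_injective
  refine Prod.ext ?_ ?_
  · change (V1 (V2 z)).fst = (V2 (V1 z)).fst
    rw [(hV1 _).1, (hV2 _).1, (hV2 _).1, (hV1 _).1, hT]
  · change (V1 (V2 z)).snd = (V2 (V1 z)).snd
    apply lp.ext
    funext n
    rw [(hV1 _).2, (hV2 _).2]
    match n with
    | 0 =>
      simp only [wclSeq]
      rw [(hV2 _).1, (hV2 _).2, (hV1 _).1, (hV1 _).2]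
      simp only [wclSeq, map_add, r12, r21, zero_add]
      exact c1 _
    | 1 =>
      simp only [wclSeq]
      rw [(hV2 _).2, (hV1 _).2, (hV2 _).2, (hV1 _).2]
      simp only [wclSeq, map_add, r12, r21, zero_add, c2, c3, add_zero]
      rw [m12, m21]
    | k + 2 =>
      simp only [wclSeq]
      rw [(hV2 _).2, (hV1 _).2, (hV2 _).2, (hV1 _).2]
      simp only [wclSeq, map_add, r12, r21, zero_add, q12, q21, add_zero]
      rw [m12, m21]

/-- The projection onto the first coordinate of `(H ⊕ H) ⊕ (H ⊕ H)`. -/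
noncomputable def wclP (H : Type) [NormedAddCommGroup H] [InnerProductSpace ℂ H] :
    WithLp 2 (WithLp 2 (H × H) × WithLp 2 (H × H)) →ₗ[ℂ]
      WithLp 2 (WithLp 2 (H × H) × WithLp 2 (H × H)) where
  toFun z := WithLp.toLp 2 (WithLp.toLp 2 (z.fst.fst, 0), 0)
  map_add' x y := by
    apply WithLp.ofLp_injective
    refine Prod.ext ?_ (by simp)
    apply WithLp.ofLp_injective
    ext <;> simp
  map_smul' c x := by
    apply WithLp.ofLp_injective
    refine Prod.ext ?_ (by simp)
    apply WithLp.ofLp_injective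
    ext <;> simp

theorem wclP_symm {H : Type} [NormedAddCommGroup H] [InnerProductSpace ℂ H]
    (x y : WithLp 2 (WithLp 2 (H × H) × WithLp 2 (H × H))) :
    ⟪wclP H x, y⟫_ℂ = ⟪x, wclP H y⟫_ℂ := by
  simp [wclP, WithLp.prod_inner_apply]

theorem wcl_ando {H : Type} [NormedAddCommGroup H] [InnerProductSpace ℂ H] [CompleteSpace H]
    (A B : H →L[ℂ] H) (hA : ‖A‖ ≤ 1) (hB : ‖B‖ ≤ 1) (hAB : A ∘L B = B ∘L A) :
    ∃ (K : Type) (_ : NormedAddCommGroup K) (_ : InnerProductSpace ℂ K) (_ : CompleteSpace K)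
      (j : H →ₗᵢ[ℂ] K) (V1 V2 : K →ₗᵢ[ℂ] K),
      (∀ z, V1 (V2 z) = V2 (V1 z)) ∧ (∀ h z, ⟪j h, V1 z⟫_ℂ = ⟪j (A h), z⟫_ℂ) ∧
        (∀ h z, ⟪j h, V2 z⟫_ℂ = ⟪j (B h), z⟫_ℂ) := by
  let T1 := ContinuousLinearMap.adjoint A
  let T2 := ContinuousLinearMap.adjoint B
  have hT : ∀ h, T1 (T2 h) = T2 (T1 h) := by
    intro h
    have h1 := congrArg ContinuousLinearMap.adjoint hAB
    rw [ContinuousLinearMap.adjoint_comp, ContinuousLinearMap.adjoint_comp] at h1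
    exact (congrArg (fun f => f h) h1).symm
  obtain ⟨D1, hD1⟩ := wcl_defect T1 (by simpa [T1] using hA)
  obtain ⟨D2, hD2⟩ := wcl_defect T2 (by simpa [T2] using hB)
  let pr : (H →ₗ[ℂ] H) → (H →ₗ[ℂ] H) → (H →ₗ[ℂ] WithLp 2 (H × H)) := fun f g =>
    (WithLp.linearEquiv 2 ℂ (H × H)).symm.toLinearMap ∘ₗ (f.prod g)
  let p := pr (D1.toLinearMap ∘ₗ T2.toLinearMap) D2.toLinearMap
  let q := pr D1.toLinearMap (D2.toLinearMap ∘ₗ T1.toLinearMap)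
  have ep : ∀ h, p h = WithLp.toLp 2 (D1 (T2 h), D2 h) := fun h => rfl
  have eq : ∀ h, q h = WithLp.toLp 2 (D1 h, D2 (T1 h)) := fun h => rfl
  have hpq : ∀ h, ‖q h‖ = ‖p h‖ := by
    intro h
    rw [← sq_eq_sq₀ (norm_nonneg _) (norm_nonneg _), WithLp.prod_norm_sq_eq_of_L2,
      WithLp.prod_norm_sq_eq_of_L2, ep, eq]
    change ‖D1 h‖ ^ 2 + ‖D2 (T1 h)‖ ^ 2 = ‖D1 (T2 h)‖ ^ 2 + ‖D2 h‖ ^ 2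
    have h1 := hD1 h
    have h2 := hD2 h
    have h3 := hD1 (T2 h)
    have h4 := hD2 (T1 h)
    rw [hT] at h3
    linarith
  obtain ⟨C, hC1, hC2, hC3⟩ := wcl_partial p q hpq
  have hCC : C ∘L ContinuousLinearMap.adjoint C ∘L C = C :=
    wcl_ext p _ _ (fun s => by simp [hC1, hC3]) (fun z hz => by simp [hC2 z hz])
  obtain ⟨U, hU⟩ := wcl_julia C (fun x => congrArg (fun f => f x) hCC)
  let W := WithLp 2 (WithLp 2 (H × H) × WithLp 2 (H × H))
  let inl : WithLp 2 (H × H) →ₗ[ℂ] W :=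
    (WithLp.linearEquiv 2 ℂ (WithLp 2 (H × H) × WithLp 2 (H × H))).symm.toLinearMap ∘ₗ
      LinearMap.inl ℂ _ _
  let P : W →ₗ[ℂ] W := wclP H
  have eP : ∀ z, P z = WithLp.toLp 2 (WithLp.toLp 2 (z.fst.fst, 0), 0) := fun z => rfl
  let b : H →ₗ[ℂ] W := inl ∘ₗ pr D1.toLinearMap 0
  let a : H →ₗ[ℂ] W := inl ∘ₗ pr 0 D2.toLinearMap
  have eb : ∀ h, b h = WithLp.toLp 2 (WithLp.toLp 2 (D1 h, 0), 0) := fun h => rfl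
  have ea : ∀ h, a h = WithLp.toLp 2 (WithLp.toLp 2 (0, D2 h), 0) := fun h => rfl
  obtain ⟨V1, V2, hV, hV1, hV2⟩ := wcl_ando_abs T1.toLinearMap T2.toLinearMap hT b a
    (fun h => by
      rw [eb, WithLp.prod_norm_sq_eq_of_L2, WithLp.prod_norm_sq_eq_of_L2]
      simpa using hD1 h)
    (fun h => by
      rw [ea, WithLp.prod_norm_sq_eq_of_L2, WithLp.prod_norm_sq_eq_of_L2]
      simpa using hD2 h)
    P (fun x => rfl) (fun x y => wclP_symm x y)
    (fun h => rfl) (fun h => rfl) U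
    (fun h => by
      have h1 := hU (p h) (by rw [hC1, hC3])
      rw [hC1, ep, eq] at h1
      have e1 : b (T2 h) + a h = WithLp.toLp 2 (WithLp.toLp 2 (D1 (T2 h), D2 h), 0) := by
        rw [eb, ea, ← WithLp.toLp_add, Prod.mk_add_mk, ← WithLp.toLp_add]; simp
      have e2 : b h + a (T1 h) = WithLp.toLp 2 (WithLp.toLp 2 (D1 h, D2 (T1 h)), 0) := by
        rw [eb, ea, ← WithLp.toLp_add, Prod.mk_add_mk, ← WithLp.toLp_add]; simp
      exact (congrArg U e1).trans (h1.trans e2.symm))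
  let j : H →ₗᵢ[ℂ] WithLp 2 (H × lp (fun _ : ℕ => W) 2) :=
    { toFun := fun h => WithLp.toLp 2 (h, 0)
      map_add' := fun x y => by
        apply WithLp.ofLp_injective
        ext <;> simp
      map_smul' := fun c x => by
        apply WithLp.ofLp_injective
        ext <;> simp
      norm_map' := fun x => by simp }
  have ej : ∀ h z, ⟪j h, z⟫_ℂ = ⟪h, z.fst⟫_ℂ := fun h z => by
    simp [j, WithLp.prod_inner_apply]
  refine ⟨_, _, _, inferInstance, j, V1, V2, hV, fun h z => ?_, fun h z => ?_⟩
  · rw [ej, ej, hV1]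
    exact ContinuousLinearMap.adjoint_inner_right A _ _
  · rw [ej, ej, hV2]
    exact ContinuousLinearMap.adjoint_inner_right B _ _

theorem wcl_gram {H K K' : Type} [NormedAddCommGroup H] [InnerProductSpace ℂ H]
    [NormedAddCommGroup K] [InnerProductSpace ℂ K] [NormedAddCommGroup K'] [InnerProductSpace ℂ K']
    (A : H →L[ℂ] H) (j : H →ₗᵢ[ℂ] K) (j' : H →ₗᵢ[ℂ] K') (V : K →ₗᵢ[ℂ] K) (V' : K' →ₗᵢ[ℂ] K')
    (hV : ∀ h z, ⟪j h, V z⟫_ℂ = ⟪j (A h), z⟫_ℂ) (hV' : ∀ h z, ⟪j' h, V' z⟫_ℂ = ⟪j' (A h), z⟫_ℂ)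
    (n m : ℕ) (h k : H) :
    ⟪(V.toLinearMap ^ n) (j h), (V.toLinearMap ^ m) (j k)⟫_ℂ =
      ⟪(V'.toLinearMap ^ n) (j' h), (V'.toLinearMap ^ m) (j' k)⟫_ℂ := by
  have hr : ∀ h z, ⟪V z, j h⟫_ℂ = ⟪z, j (A h)⟫_ℂ := fun h z => by
    rw [← inner_conj_symm, hV, inner_conj_symm]
  have hr' : ∀ h z, ⟪V' z, j' h⟫_ℂ = ⟪z, j' (A h)⟫_ℂ := fun h z => by
    rw [← inner_conj_symm, hV', inner_conj_symm]
  have s : ∀ n z, (V.toLinearMap ^ (n + 1)) z = V ((V.toLinearMap ^ n) z) := fun n z => by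
    rw [pow_succ']; rfl
  have s' : ∀ n z, (V'.toLinearMap ^ (n + 1)) z = V' ((V'.toLinearMap ^ n) z) := fun n z => by
    rw [pow_succ']; rfl
  induction n generalizing m h k with
  | zero =>
    induction m generalizing h with
    | zero => simp
    | succ m ih =>
      have := ih (A h)
      simp only [pow_zero, Module.End.one_apply] at this ⊢
      rw [s, s', hV, hV', this]
  | succ n ih =>
    cases m with
    | zero =>
      have := ih 0 h (A k)
      simp only [pow_zero, Module.End.one_apply] at this ⊢
      rw [s, s', hr, hr', this]
    | succ m =>
      rw [s, s, s', s', V.inner_map_map, V'.inner_map_map, ih]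

/-- The canonical map onto the minimal isometric lift. -/
noncomputable def wclGen {H K : Type} [NormedAddCommGroup H] [InnerProductSpace ℂ H]
    [NormedAddCommGroup K] [InnerProductSpace ℂ K] (j : H →ₗᵢ[ℂ] K) (V : K →ₗᵢ[ℂ] K) :
    (ℕ →₀ H) →ₗ[ℂ] K :=
  Finsupp.lsum ℂ (fun n => (V.toLinearMap ^ n) ∘ₗ j.toLinearMap)

theorem wclGen_single {H K : Type} [NormedAddCommGroup H] [InnerProductSpace ℂ H]
    [NormedAddCommGroup K] [InnerProductSpace ℂ K] (j : H →ₗᵢ[ℂ] K) (V : K →ₗᵢ[ℂ] K)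
    (n : ℕ) (h : H) : wclGen j V (Finsupp.single n h) = (V.toLinearMap ^ n) (j h) := by
  simp [wclGen]

theorem wcl_gram_gen {H K K' : Type} [NormedAddCommGroup H] [InnerProductSpace ℂ H]
    [NormedAddCommGroup K] [InnerProductSpace ℂ K] [NormedAddCommGroup K'] [InnerProductSpace ℂ K']
    (A : H →L[ℂ] H) (j : H →ₗᵢ[ℂ] K) (j' : H →ₗᵢ[ℂ] K') (V : K →ₗᵢ[ℂ] K) (V' : K' →ₗᵢ[ℂ] K')
    (hV : ∀ h z, ⟪j h, V z⟫_ℂ = ⟪j (A h), z⟫_ℂ) (hV' : ∀ h z, ⟪j' h, V' z⟫_ℂ = ⟪j' (A h), z⟫_ℂ)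
    (s t : ℕ →₀ H) :
    ⟪wclGen j V s, wclGen j V t⟫_ℂ = ⟪wclGen j' V' s, wclGen j' V' t⟫_ℂ := by
  induction s using Finsupp.induction_linear with
  | zero => simp
  | add f g hf hg => rw [map_add, map_add, inner_add_left, inner_add_left, hf, hg]
  | single n h =>
    induction t using Finsupp.induction_linear with
    | zero => simp
    | add f g hf hg => rw [map_add, map_add, inner_add_right, inner_add_right, hf, hg]
    | single m k =>
      simp only [wclGen_single]
      exact wcl_gram A j j' V V' hV hV' n m h k

theorem wcl_dsum {K L : Type} [NormedAddCommGroup K] [InnerProductSpace ℂ K]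
    [NormedAddCommGroup L] [InnerProductSpace ℂ L] (V : K →ₗᵢ[ℂ] K) (W : L →ₗᵢ[ℂ] L) :
    ∃ S : WithLp 2 (K × L) →ₗᵢ[ℂ] WithLp 2 (K × L),
      ∀ z, S z = WithLp.toLp 2 (V z.fst, W z.snd) := by
  refine ⟨{ toFun := fun z => WithLp.toLp 2 (V z.fst, W z.snd)
            map_add' := fun x y => by
              apply WithLp.ofLp_injective
              ext <;> simp
            map_smul' := fun c x => by
              apply WithLp.ofLp_injective
              ext <;> simp
            norm_map' := fun x => ?_ }, fun z => rfl⟩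
  rw [← sq_eq_sq₀ (norm_nonneg _) (norm_nonneg _), WithLp.prod_norm_sq_eq_of_L2,
    WithLp.prod_norm_sq_eq_of_L2]
  simp

theorem wcl_isom_adj {K : Type} [NormedAddCommGroup K] [InnerProductSpace ℂ K] [CompleteSpace K]
    (V : K →ₗᵢ[ℂ] K) (z : K) :
    ContinuousLinearMap.adjoint V.toContinuousLinearMap (V z) = z := by
  apply ext_inner_right ℂ
  intro y
  rw [ContinuousLinearMap.adjoint_inner_left]
  exact V.inner_map_map z y

theorem weak_commutant_lifting {H Kt : Type}
    [NormedAddCommGroup H] [InnerProductSpace ℂ H] [CompleteSpace H]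
    [NormedAddCommGroup Kt] [InnerProductSpace ℂ Kt] [CompleteSpace Kt]
    (A B : H →L[ℂ] H) (hA : ‖A‖ ≤ 1) (hB : ‖B‖ ≤ 1) (hAB : A ∘L B = B ∘L A)
    (e : H →ₗᵢ[ℂ] Kt) (Xt : Kt →L[ℂ] Kt)
    (hXt : Xt ∘L ContinuousLinearMap.adjoint Xt = 1)
    (hXtA : ∀ x : H, Xt (e x) = e (A x)) :
    Nonempty (CommutantLift B e Xt) := by
  obtain ⟨K1, i1, i2, i3, j, V1, V2, hV, hV1, hV2⟩ := wcl_ando A B hA hB hAB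
  have hXt' : ∀ z, Xt (ContinuousLinearMap.adjoint Xt z) = z :=
    fun z => congrArg (fun f => f z) hXt
  let V : Kt →ₗᵢ[ℂ] Kt :=
    { toLinearMap := (ContinuousLinearMap.adjoint Xt).toLinearMap
      norm_map' := fun z => by
        change ‖ContinuousLinearMap.adjoint Xt z‖ = ‖z‖
        rw [@norm_eq_sqrt_re_inner ℂ, @norm_eq_sqrt_re_inner ℂ _ _ _ _ z,
          ContinuousLinearMap.adjoint_inner_left, hXt'] }
  have eV : ∀ z, V z = ContinuousLinearMap.adjoint Xt z := fun z => rfl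
  have hVl : ∀ h z, ⟪e h, V z⟫_ℂ = ⟪e (A h), z⟫_ℂ := fun h z => by
    rw [eV, ContinuousLinearMap.adjoint_inner_right, hXtA]
  let X1 := ContinuousLinearMap.adjoint V1.toContinuousLinearMap
  have hX1V : ∀ z, X1 (V1 z) = z := wcl_isom_adj V1
  have hX1i : ∀ x y, ⟪X1 x, y⟫_ℂ = ⟪x, V1 y⟫_ℂ := fun x y =>
    ContinuousLinearMap.adjoint_inner_left _ _ _
  have hX1j : ∀ h, X1 (j h) = j (A h) := fun h => by
    apply ext_inner_right ℂ
    intro y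
    rw [hX1i, hV1]
  let p := wclGen e V
  let q := wclGen j V1
  have hpq : ∀ s, ‖q s‖ = ‖p s‖ := fun s => by
    rw [@norm_eq_sqrt_re_inner ℂ, @norm_eq_sqrt_re_inner ℂ _ _ _ _ (p s)]
    rw [wcl_gram_gen A j e V1 V hV1 hVl]
  obtain ⟨C, hC1, hC2, hC3⟩ := wcl_partial p q hpq
  have hCC : C ∘L ContinuousLinearMap.adjoint C ∘L C = C :=
    wcl_ext p _ _ (fun s => by simp [hC1, hC3]) (fun z hz => by simp [hC2 z hz])
  have up : ∀ s, ∃ s', V (p s) = p s' ∧ V1 (q s) = q s' := by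
    intro s
    induction s using Finsupp.induction_linear with
    | zero => exact ⟨0, by simp, by simp⟩
    | add f g hf hg =>
      obtain ⟨f', h1, h2⟩ := hf
      obtain ⟨g', h3, h4⟩ := hg
      exact ⟨f' + g', by simp only [map_add, h1, h3], by simp only [map_add, h2, h4]⟩
    | single n h =>
      refine ⟨Finsupp.single (n + 1) h, ?_, ?_⟩
      · simp only [p, wclGen_single, pow_succ']; rfl
      · simp only [q, wclGen_single, pow_succ']; rfl
  have down : ∀ s, ∃ s', Xt (p s) = p s' ∧ X1 (q s) = q s' := by
    intro s
    induction s using Finsupp.induction_linear with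
    | zero => exact ⟨0, by simp, by simp⟩
    | add f g hf hg =>
      obtain ⟨f', h1, h2⟩ := hf
      obtain ⟨g', h3, h4⟩ := hg
      exact ⟨f' + g', by simp only [map_add, h1, h3], by simp only [map_add, h2, h4]⟩
    | single n h =>
      cases n with
      | zero =>
        refine ⟨Finsupp.single 0 (A h), ?_, ?_⟩
        · simp only [p, wclGen_single, pow_zero, Module.End.one_apply, hXtA]
        · simp only [q, wclGen_single, pow_zero, Module.End.one_apply, hX1j]
      | succ n =>
        refine ⟨Finsupp.single n h, ?_, ?_⟩
        · simp only [p, wclGen_single, pow_succ']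
          exact hXt' _
        · simp only [q, wclGen_single, pow_succ']
          exact hX1V _
  have hXC : X1 ∘L C = C ∘L Xt := by
    refine wcl_ext p _ _ (fun s => ?_) (fun z hz => ?_)
    · obtain ⟨s', h1, h2⟩ := down s
      simp only [ContinuousLinearMap.comp_apply, hC1, h1, h2]
    · simp only [ContinuousLinearMap.comp_apply]
      rw [hC2 z hz, map_zero, hC2]
      intro s
      obtain ⟨s', h1, h2⟩ := up s
      rw [← ContinuousLinearMap.adjoint_inner_left, ← eV, h1, hz]
  have hVC : V1.toContinuousLinearMap ∘L C = C ∘L ContinuousLinearMap.adjoint Xt := by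
    refine wcl_ext p _ _ (fun s => ?_) (fun z hz => ?_)
    · obtain ⟨s', h1, h2⟩ := up s
      simp only [ContinuousLinearMap.comp_apply, hC1]
      rw [← eV, h1, hC1]
      exact h2
    · simp only [ContinuousLinearMap.comp_apply]
      rw [hC2 z hz, map_zero, hC2]
      intro s
      obtain ⟨s', h1, h2⟩ := down s
      rw [ContinuousLinearMap.adjoint_inner_right, h1, hz]
  have hXC' : ∀ z, X1 (C z) = C (Xt z) := fun z => congrArg (fun f => f z) hXC
  have hCX : ∀ z, ContinuousLinearMap.adjoint C (X1 z) = Xt (ContinuousLinearMap.adjoint C z) := by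
    intro z
    have h := congrArg ContinuousLinearMap.adjoint hVC
    rw [ContinuousLinearMap.adjoint_comp, ContinuousLinearMap.adjoint_comp,
      ContinuousLinearMap.adjoint_adjoint] at h
    exact congrArg (fun f => f z) h
  obtain ⟨S1, hS1⟩ := wcl_dsum V1 V
  obtain ⟨S2, hS2⟩ := wcl_dsum V2 (LinearIsometry.id : Kt →ₗᵢ[ℂ] Kt)
  let emb : Kt →ₗᵢ[ℂ] WithLp 2 (K1 × Kt) :=
    { toFun := fun z => WithLp.toLp 2 (C z, z - ContinuousLinearMap.adjoint C (C z))
      map_add' := fun x y => by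
        apply WithLp.ofLp_injective
        ext
        · simp
        · simp; abel
      map_smul' := fun c x => by
        apply WithLp.ofLp_injective
        ext <;> simp [smul_sub]
      norm_map' := fun z => by
        change ‖WithLp.toLp 2 (C z, z - ContinuousLinearMap.adjoint C (C z))‖ = ‖z‖
        rw [@norm_eq_sqrt_re_inner ℂ, @norm_eq_sqrt_re_inner ℂ _ _ _ _ z]
        congr 2
        have h : C (ContinuousLinearMap.adjoint C (C z)) = C z := congrArg (fun f => f z) hCC
        rw [WithLp.prod_inner_apply]
        change ⟪C z, C z⟫_ℂ + ⟪z - ContinuousLinearMap.adjoint C (C z),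
          z - ContinuousLinearMap.adjoint C (C z)⟫_ℂ = ⟪z, z⟫_ℂ
        have a1 : ⟪z, ContinuousLinearMap.adjoint C (C z)⟫_ℂ = ⟪C z, C z⟫_ℂ :=
          ContinuousLinearMap.adjoint_inner_right C _ _
        have a2 : ⟪ContinuousLinearMap.adjoint C (C z), z⟫_ℂ = ⟪C z, C z⟫_ℂ :=
          ContinuousLinearMap.adjoint_inner_left C _ _
        have a3 : ⟪ContinuousLinearMap.adjoint C (C z), ContinuousLinearMap.adjoint C (C z)⟫_ℂ =
            ⟪C z, C z⟫_ℂ := by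
          rw [ContinuousLinearMap.adjoint_inner_left, h]
        rw [inner_sub_left, inner_sub_right, inner_sub_right, a1, a2, a3]
        ring }
  have eemb : ∀ z, emb z = WithLp.toLp 2 (C z, z - ContinuousLinearMap.adjoint C (C z)) :=
    fun z => rfl
  have eembe : ∀ h, emb (e h) = WithLp.toLp 2 (j h, 0) := by
    intro h
    have h1 : p (Finsupp.single 0 h) = e h := by simp [p, wclGen_single]
    have h2 : q (Finsupp.single 0 h) = j h := by simp [q, wclGen_single]
    rw [eemb, ← h1, hC1, hC3, h2, sub_self]
  refine ⟨{ K := WithLp 2 (K1 × Kt)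
            emb := emb
            X := ContinuousLinearMap.adjoint S1.toContinuousLinearMap
            Y := ContinuousLinearMap.adjoint S2.toContinuousLinearMap
            X_coisometry := ?_
            Y_coisometry := ?_
            commute := ?_
            X_extends := ?_
            Y_extends := ?_ }⟩
  · rw [ContinuousLinearMap.adjoint_adjoint]
    ext1 z
    exact wcl_isom_adj S1 z
  · rw [ContinuousLinearMap.adjoint_adjoint]
    ext1 z
    exact wcl_isom_adj S2 z
  · rw [← ContinuousLinearMap.adjoint_comp, ← ContinuousLinearMap.adjoint_comp]
    congr 1
    ext1 z
    change S2 (S1 z) = S1 (S2 z)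
    simp only [hS1, hS2, LinearIsometry.id_apply]
    change WithLp.toLp 2 (V2 (V1 z.fst), V z.snd) = WithLp.toLp 2 (V1 (V2 z.fst), V z.snd)
    rw [hV]
  · intro z
    apply ext_inner_right ℂ
    intro y
    rw [ContinuousLinearMap.adjoint_inner_left]
    change ⟪emb z, S1 y⟫_ℂ = _
    rw [hS1, eemb, eemb, WithLp.prod_inner_apply, WithLp.prod_inner_apply]
    change ⟪C z, V1 y.fst⟫_ℂ + ⟪z - ContinuousLinearMap.adjoint C (C z), V y.snd⟫_ℂ =
      ⟪C (Xt z), y.fst⟫_ℂ + ⟪Xt z - ContinuousLinearMap.adjoint C (C (Xt z)), y.snd⟫_ℂ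
    rw [← hX1i, hXC', eV, ContinuousLinearMap.adjoint_inner_right, map_sub, ← hCX, hXC']
  · intro x
    apply ext_inner_right ℂ
    intro y
    rw [ContinuousLinearMap.adjoint_inner_left]
    change ⟪emb (e x), S2 y⟫_ℂ = _
    rw [hS2, eembe, eembe, WithLp.prod_inner_apply, WithLp.prod_inner_apply]
    change ⟪j x, V2 y.fst⟫_ℂ + ⟪(0 : Kt), y.snd⟫_ℂ = ⟪j (B x), y.fst⟫_ℂ + ⟪(0 : Kt), y.snd⟫_ℂ
    rw [hV2]
end

section
/- (Lemma 2.2) Let G be an acyclic graph on vertices {1,...,n} and A₁,...,Aₙ ∈ B(H) contractions that commute according to G. Then there exists a Hilbert space K ⊇ H and co-isometries X₁,...,Xₙ ∈ B(K) commuting according to G such that Xⱼ extends Aⱼ for each j. -/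
open ContinuousLinearMap

/-- Data witnessing the conclusion of Lemma 2.2: a Hilbert space `K ⊇ H` and
co-isometries `X₁, …, Xₙ` on `K` commuting according to the graph `G` such that
`Xⱼ` extends `Aⱼ` for each `j`. -/
structure GraphCoisometricExtension {n : ℕ} {H : Type}
    [NormedAddCommGroup H] [InnerProductSpace ℂ H] [CompleteSpace H]
    (G : SimpleGraph (Fin n)) (A : Fin n → H →L[ℂ] H) where
  K : Type
  [grp : NormedAddCommGroup K]
  [ips : InnerProductSpace ℂ K]
  [cpl : CompleteSpace K]
  emb : H →ₗᵢ[ℂ] K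
  X : Fin n → K →L[ℂ] K
  coisometry : ∀ j, X j ∘L ContinuousLinearMap.adjoint (X j) = 1
  commute : ∀ i j, G.Adj i j → X i ∘L X j = X j ∘L X i
  extend : ∀ (j) (x : H), X j (emb x) = emb (A j x)

set_option linter.unusedSectionVars false

namespace GCE

section basic
variable {K : Type} [NormedAddCommGroup K] [InnerProductSpace ℂ K] [CompleteSpace K]
variable {E : Type} [NormedAddCommGroup E] [InnerProductSpace ℂ E] [CompleteSpace E]
variable {F : Type} [NormedAddCommGroup F] [InnerProductSpace ℂ F] [CompleteSpace F]

/-- Corestriction of an operator to the closure of its range. -/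
theorem exists_dense_factor (a : K →L[ℂ] E) :
    ∃ a' : K →L[ℂ] (a.range.topologicalClosure), DenseRange a' ∧ ∀ k, (a' k : E) = a k := by
  refine ⟨a.codRestrict _ (fun k => Submodule.le_topologicalClosure _ ⟨k, rfl⟩), ?_, fun k => rfl⟩
  intro x
  rw [closure_subtype]
  have hx := x.2
  rw [← SetLike.mem_coe, Submodule.topologicalClosure_coe] at hx
  convert hx using 2
  ext y
  constructor
  · rintro ⟨z, ⟨k, rfl⟩, rfl⟩
    exact ⟨k, rfl⟩
  · rintro ⟨k, rfl⟩
    exact ⟨_, ⟨k, rfl⟩, rfl⟩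

/-- Existence of defect operators. -/
theorem exists_defect (X : K →L[ℂ] F) (hX : ∀ k, ‖X k‖ ≤ ‖k‖) :
    ∃ (E : Type) (_ : NormedAddCommGroup E) (_ : InnerProductSpace ℂ E) (_ : CompleteSpace E)
      (D : K →L[ℂ] E), DenseRange D ∧ ∀ k, ‖D k‖ ^ 2 = ‖k‖ ^ 2 - ‖X k‖ ^ 2 := by
  set P : K →L[ℂ] K := 1 - (adjoint X) ∘L X with hP
  have hre : ∀ k, (inner ℂ (P k) k).re = ‖k‖ ^ 2 - ‖X k‖ ^ 2 := by
    intro k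
    have h1 : inner ℂ (P k) k = inner ℂ k k - inner ℂ (X k) (X k) := by
      simp [hP, inner_sub_left, adjoint_inner_left]
    rw [h1, inner_self_eq_norm_sq_to_K, inner_self_eq_norm_sq_to_K]
    norm_cast
  have hsa : IsSelfAdjoint P := by
    rw [hP]
    refine (IsSelfAdjoint.one _).sub ?_
    exact IsSelfAdjoint.adjoint_conj (IsSelfAdjoint.one (F →L[ℂ] F)) X
  have hpos : 0 ≤ P := by
    rw [ContinuousLinearMap.nonneg_iff_isPositive]
    refine ⟨hsa.isSymmetric, fun k => ?_⟩
    rw [reApplyInnerSelf_apply]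
    show 0 ≤ (inner ℂ (P k) k).re
    rw [hre]
    have := hX k
    have := norm_nonneg (X k)
    nlinarith
  obtain ⟨D', hd, hD'⟩ := exists_dense_factor (CFC.sqrt P)
  refine ⟨_, inferInstance, inferInstance, inferInstance, D', hd, fun k => ?_⟩
  have h1 : ‖D' k‖ = ‖CFC.sqrt P k‖ := by rw [← hD']; rfl
  have hs : IsSelfAdjoint (CFC.sqrt P) := IsSelfAdjoint.of_nonneg (CFC.sqrt_nonneg P)
  have h2 : inner ℂ (CFC.sqrt P k) (CFC.sqrt P k) = inner ℂ (P k) k := by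
    conv_rhs => rw [← CFC.sqrt_mul_sqrt_self P hpos]
    rw [← adjoint_inner_left, hs.adjoint_eq]
    rfl
  rw [h1, ← hre, ← h2, inner_self_eq_norm_sq_to_K]
  norm_cast

/-- Douglas factorization. -/
theorem exists_factor (a : K →L[ℂ] E) (b : K →L[ℂ] F) (h : ∀ k, ‖b k‖ ≤ ‖a k‖) :
    ∃ w : E →L[ℂ] F, (∀ k, w (a k) = b k) ∧ ∀ x, ‖w x‖ ≤ ‖x‖ := by
  obtain ⟨a', hd, ha'⟩ := exists_dense_factor a
  have hn : ∀ k, ‖b k‖ ≤ 1 * ‖a' k‖ := by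
    intro k
    have : ‖a' k‖ = ‖a k‖ := by rw [← ha']; rfl
    rw [this, one_mul]; exact h k
  refine ⟨(b.toLinearMap.extendOfNorm a'.toLinearMap) ∘L
    a.range.topologicalClosure.orthogonalProjectionOnto, fun k => ?_, fun x => ?_⟩
  · have : a.range.topologicalClosure.orthogonalProjectionOnto (a k) = a' k := by
      rw [← ha', Submodule.orthogonalProjectionOnto_mem_subspace_eq_self]
    rw [comp_apply, this]
    exact LinearMap.extendOfNorm_eq (f := b.toLinearMap) (e := a'.toLinearMap) hd ⟨1, hn⟩ k
  · rw [comp_apply]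
    refine (LinearMap.norm_extendOfNorm_apply_le (f := b.toLinearMap) (e := a'.toLinearMap)
      hd 1 hn _).trans ?_
    rw [one_mul]
    exact Submodule.norm_orthogonalProjectionOnto_apply_le _ _

/-- Isometric factorization through a dense range operator. -/
theorem exists_isometry (a : K →L[ℂ] E) (b : K →L[ℂ] F) (hd : DenseRange a)
    (h : ∀ k, ‖b k‖ = ‖a k‖) : ∃ w : E →ₗᵢ[ℂ] F, ∀ k, w (a k) = b k := by
  obtain ⟨w, hw, -⟩ := exists_factor a b (fun k => (h k).le)
  refine ⟨⟨w.toLinearMap, fun x => ?_⟩, hw⟩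
  refine hd.induction_on (p := fun x => ‖w x‖ = ‖x‖) x ?_ ?_
  · exact isClosed_eq (by fun_prop) (by fun_prop)
  · intro k
    rw [hw, h]

end basic

section lpspace
variable {E : Type} [NormedAddCommGroup E] [InnerProductSpace ℂ E]

abbrev l2 (E : Type) [NormedAddCommGroup E] : Type := lp (fun _ : ℕ => E) 2

theorem memlp_iff (f : ℕ → E) :
    Memℓp f 2 ↔ Summable fun i => ‖f i‖ ^ 2 := by
  rw [memℓp_gen_iff (by norm_num)]
  norm_num

theorem hasSum_norm (f : l2 E) : HasSum (fun i => ‖f i‖ ^ 2) (‖f‖ ^ 2) := by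
  have := lp.hasSum_norm (p := 2) (by norm_num) f
  norm_num at this
  exact this

noncomputable def l2mk (f : ℕ → E) (h : Summable fun i => ‖f i‖ ^ 2) : l2 E :=
  ⟨f, (memlp_iff f).2 h⟩

@[simp] theorem l2mk_apply (f : ℕ → E) (h : Summable fun i => ‖f i‖ ^ 2) (i : ℕ) :
    l2mk f h i = f i := rfl

noncomputable def l2map (U : E →ₗᵢ[ℂ] E) : l2 E →ₗᵢ[ℂ] l2 E where
  toFun f := l2mk (fun i => U (f i)) (by simpa using (hasSum_norm f).summable)
  map_add' f g := by ext i; simp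
  map_smul' c f := by ext i; simp
  norm_map' f := by
    refine (sq_eq_sq₀ (norm_nonneg _) (norm_nonneg _)).1 ?_
    refine (hasSum_norm _).unique ?_
    simpa using hasSum_norm f

@[simp] theorem l2map_apply (U : E →ₗᵢ[ℂ] E) (f : l2 E) (i : ℕ) : l2map U f i = U (f i) := rfl

noncomputable def l2cons : (E × l2 E) →ₗ[ℂ] l2 E where
  toFun x := l2mk (fun i => Nat.casesOn i x.1 (fun j => x.2 j)) (by
    rw [← summable_nat_add_iff 1]
    exact (hasSum_norm x.2).summable)
  map_add' x y := by ext i; cases i <;> simp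
  map_smul' c x := by ext i; cases i <;> simp

@[simp] theorem l2cons_zero (x : E × l2 E) : l2cons x 0 = x.1 := rfl
@[simp] theorem l2cons_succ (x : E × l2 E) (j : ℕ) : l2cons x (j + 1) = x.2 j := rfl

theorem l2cons_norm (x : E × l2 E) : ‖l2cons x‖ ^ 2 = ‖x.1‖ ^ 2 + ‖x.2‖ ^ 2 := by
  refine (hasSum_norm _).unique ?_
  have := (hasSum_nat_add_iff (f := fun i => ‖l2cons x i‖ ^ 2) 1 (g := ‖x.2‖ ^ 2)).1
    (by simpa using hasSum_norm x.2)
  simpa [add_comm] using this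

end lpspace

section lift
variable {H : Type} [NormedAddCommGroup H] [InnerProductSpace ℂ H] [CompleteSpace H]
variable {K : Type} [NormedAddCommGroup K] [InnerProductSpace ℂ K] [CompleteSpace K]
variable {R : Type} [NormedAddCommGroup R] [InnerProductSpace ℂ R] [CompleteSpace R]

theorem Q_emb (ι : H →ₗᵢ[ℂ] K) (Q : K →L[ℂ] H)
    (hQ : ∀ x k, inner ℂ (ι x) k = inner ℂ x (Q k)) (x : H) : Q (ι x) = x := by
  refine ext_inner_left ℂ fun y => ?_
  rw [← hQ, ι.inner_map_map]

theorem Q_norm (ι : H →ₗᵢ[ℂ] K) (Q : K →L[ℂ] H)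
    (hQ : ∀ x k, inner ℂ (ι x) k = inner ℂ x (Q k)) (k : K) : ‖Q k‖ ≤ ‖k‖ := by
  have h1 : ‖Q k‖ * ‖Q k‖ ≤ ‖Q k‖ * ‖k‖ := by
    have := norm_inner_le_norm (𝕜 := ℂ) (ι (Q k)) k
    rw [hQ, inner_self_eq_norm_sq_to_K, ι.norm_map] at this
    simpa [pow_two] using this
  by_contra h
  push Not at h
  have := norm_nonneg k
  nlinarith

/-- Sequence bound used in commutant lifting. -/
theorem exists_seq {E L : Type} [NormedAddCommGroup E] [InnerProductSpace ℂ E]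
    [NormedAddCommGroup L] [InnerProductSpace ℂ L]
    (w₁ : E →L[ℂ] E) (w₂ : E →L[ℂ] L) (hw : ∀ x, ‖w₁ x‖ ^ 2 + ‖w₂ x‖ ^ 2 ≤ ‖x‖ ^ 2) :
    ∃ F : E →L[ℂ] l2 L, (∀ x, ‖F x‖ ≤ ‖x‖) ∧ ∀ x n, F x n = w₂ ((w₁ ^ n) x) := by
  have hb : ∀ x N, ∑ n ∈ Finset.range N, ‖w₂ ((w₁ ^ n) x)‖ ^ 2 ≤ ‖x‖ ^ 2 - ‖(w₁ ^ N) x‖ ^ 2 := by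
    intro x N
    induction N with
    | zero => simp
    | succ N ih =>
      rw [Finset.sum_range_succ, pow_succ' w₁ N]
      have := hw ((w₁ ^ N) x)
      simp only [mul_apply_eq_comp] at *
      linarith
  have hb' : ∀ x N, ∑ n ∈ Finset.range N, ‖w₂ ((w₁ ^ n) x)‖ ^ 2 ≤ ‖x‖ ^ 2 := by
    intro x N
    have := hb x N
    have := sq_nonneg ‖(w₁ ^ N) x‖
    linarith
  have hs : ∀ x, Summable fun n => ‖w₂ ((w₁ ^ n) x)‖ ^ 2 := fun x =>
    summable_of_sum_range_le (fun n => by positivity) (hb' x)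
  let F₀ : E →ₗ[ℂ] l2 L :=
    { toFun := fun x => l2mk (fun n => w₂ ((w₁ ^ n) x)) (hs x)
      map_add' := fun x y => by ext i; simp
      map_smul' := fun c x => by ext i; simp }
  have hF : ∀ x, ‖F₀ x‖ ≤ 1 * ‖x‖ := by
    intro x
    rw [one_mul]
    refine (sq_le_sq₀ (norm_nonneg _) (norm_nonneg _)).1 ?_
    rw [← (hasSum_norm (F₀ x)).tsum_eq]
    exact Real.tsum_le_of_sum_range_le (fun n => by positivity) (hb' x)
  refine ⟨F₀.mkContinuous 1 hF, fun x => by simpa using hF x, fun x n => rfl⟩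

/-- Commutant lifting: a contraction `S` commuting with `T` lifts to a contraction commuting with
a given isometric lift `V` of `T`. -/
theorem commutant_lift (ι : H →ₗᵢ[ℂ] K) (Q : K →L[ℂ] H)
    (hQ : ∀ x k, inner ℂ (ι x) k = inner ℂ x (Q k)) (V : K →ₗᵢ[ℂ] K) (T S : H →L[ℂ] H)
    (hV : ∀ k, Q (V k) = T (Q k)) (hTS : ∀ x, T (S x) = S (T x)) (hS : ∀ x, ‖S x‖ ≤ ‖x‖) :
    ∃ Y : K →L[ℂ] K, (∀ k, ‖Y k‖ ≤ ‖k‖) ∧ (∀ k, Y (V k) = V (Y k)) ∧ ∀ k, Q (Y k) = S (Q k) := by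
  have hQι := Q_emb ι Q hQ
  have hQn := Q_norm ι Q hQ
  set Lo : H →L[ℂ] K := V.toContinuousLinearMap ∘L ι.toContinuousLinearMap -
    ι.toContinuousLinearMap ∘L T with hLo
  have hLo' : ∀ h, Lo h = V (ι h) - ι (T h) := fun h => rfl
  have hQVL : ∀ n h, Q ((V ^ n) (Lo h)) = 0 := by
    intro n
    induction n with
    | zero => intro h; simp [hLo', hV, hQι]
    | succ n ih => intro h; rw [pow_succ']; show Q (V ((V ^ n) (Lo h))) = 0; rw [hV, ih, map_zero]
  have hLn : ∀ h, ‖Lo h‖ ^ 2 = ‖h‖ ^ 2 - ‖T h‖ ^ 2 := by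
    intro h
    have h0 : inner ℂ (ι (T h)) (Lo h) = 0 := by
      rw [hQ]; have := hQVL 0 h; rw [pow_zero] at this
      simp only [LinearIsometry.coe_one, id] at this
      rw [this, inner_zero_right]
    have h1 := norm_add_sq_eq_norm_sq_add_norm_sq_of_inner_eq_zero (𝕜 := ℂ) _ _ h0
    have h2 : ι (T h) + Lo h = V (ι h) := by rw [hLo']; abel
    rw [h2] at h1
    simp only [LinearIsometry.norm_map] at h1
    nlinarith
  set M := Lo.range.topologicalClosure with hM
  obtain ⟨L', hL'd, hL'⟩ : ∃ L' : H →L[ℂ] M, DenseRange L' ∧ ∀ k, (L' k : K) = Lo k :=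
    exists_dense_factor Lo
  have hQM : ∀ n, ∀ l ∈ M, Q ((V ^ n) l) = 0 := by
    intro n
    have : M ≤ (Q ∘L (V ^ n).toContinuousLinearMap).ker := by
      refine Submodule.topologicalClosure_minimal _ ?_ (isClosed_ker _)
      rintro _ ⟨h, rfl⟩
      exact hQVL n h
    exact fun l hl => this hl
  have hor : ∀ n, ∀ l' ∈ M, ∀ l ∈ M, inner ℂ ((V ^ (n + 1)) l') l = 0 := by
    intro n l' hl'
    have : M ≤ (innerSL ℂ ((V ^ (n + 1)) l')).ker := by
      refine Submodule.topologicalClosure_minimal _ ?_ (isClosed_ker _)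
      rintro _ ⟨h, rfl⟩
      show inner ℂ ((V ^ (n + 1)) l') (Lo h) = 0
      have h1 : inner ℂ ((V ^ (n + 1)) l') (ι (T h)) = 0 := by
        rw [← inner_conj_symm, hQ, hQM _ _ hl']; simp
      have h2 : inner ℂ ((V ^ (n + 1)) l') (V (ι h)) = 0 := by
        rw [pow_succ']
        show inner ℂ (V ((V ^ n) l')) (V (ι h)) = 0
        rw [V.inner_map_map, ← inner_conj_symm, hQ, hQM _ _ hl']; simp
      rw [hLo', inner_sub_right, h1, h2, sub_zero]
    exact fun l hl => this hl
  let P : ℕ → M →ₗᵢ[ℂ] K := fun n => (V ^ n).comp M.subtypeₗᵢ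
  have hP : ∀ n l, P n l = (V ^ n) (l : K) := fun n l => rfl
  have hor' : ∀ i d (l' l : M), inner ℂ (P (i + (d + 1)) l') (P i l) = 0 := by
    intro i d l' l
    rw [hP, hP, pow_add]
    show inner ℂ ((V ^ i) ((V ^ (d + 1)) (l' : K))) ((V ^ i) (l : K)) = 0
    rw [LinearIsometry.inner_map_map]
    exact hor d _ l'.2 _ l.2
  have hOF : OrthogonalFamily ℂ (fun _ : ℕ => M) P := by
    intro i j hij v w
    rcases lt_or_gt_of_ne hij with h | h
    · obtain ⟨d, rfl⟩ := Nat.exists_eq_add_of_lt h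
      rw [← inner_conj_symm]
      have := hor' i d w v
      rw [← add_assoc] at this
      rw [this, map_zero]
    · obtain ⟨d, rfl⟩ := Nat.exists_eq_add_of_lt h
      exact hor' j d v w
  set J : l2 M →ₗᵢ[ℂ] K := hOF.linearIsometry with hJ
  have hJs : ∀ f : l2 M, HasSum (fun i => (V ^ i) (f i : K)) (J f) := fun f =>
    hOF.hasSum_linearIsometry f
  have hQJ : ∀ f, Q (J f) = 0 := by
    intro f
    have h1 := Q.hasSum (hJs f)
    refine h1.unique ?_
    have : (fun i => Q ((V ^ i) (f i : K))) = fun _ => 0 := by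
      funext i; exact hQM i _ (f i).2
    rw [this]; exact hasSum_zero
  -- the defect of `S Q`
  set X : K →L[ℂ] H := S ∘L Q with hX
  have hXn : ∀ k, ‖X k‖ ≤ ‖k‖ := fun k => (hS _).trans (hQn k)
  have hXV : ∀ k, X (V k) = T (X k) := fun k => by simp [hX, hV, hTS]
  obtain ⟨E, _, _, _, D, hDd, hD⟩ := exists_defect X hXn
  let b : K →L[ℂ] WithLp 2 (E × M) :=
    (WithLp.prodContinuousLinearEquiv 2 ℂ E M).symm.toContinuousLinearMap ∘L (D.prod (L' ∘L X))
  have hb1 : ∀ k, (b k).fst = D k := fun k => rfl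
  have hb2 : ∀ k, (b k).snd = L' (X k) := fun k => rfl
  have hL'n : ∀ h, ‖L' h‖ = ‖Lo h‖ := fun h => by rw [← hL']; rfl
  obtain ⟨w, hw, hwn⟩ := exists_factor (D ∘L V.toContinuousLinearMap) b (by
    intro k
    refine (sq_le_sq₀ (norm_nonneg _) (norm_nonneg _)).1 ?_
    rw [WithLp.prod_norm_sq_eq_of_L2, hb1, hb2, hL'n, hLn, hD]
    show _ ≤ ‖D (V k)‖ ^ 2
    rw [hD, hXV, V.norm_map]
    linarith)
  let w₁ : E →L[ℂ] E := WithLp.fstL 2 ℂ E M ∘L w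
  let w₂ : E →L[ℂ] M := WithLp.sndL 2 ℂ E M ∘L w
  have hw1 : ∀ k, w₁ (D (V k)) = D k := fun k => by
    exact (congrArg WithLp.fst (hw k)).trans (hb1 k)
  have hw2 : ∀ k, w₂ (D (V k)) = L' (X k) := fun k => by
    exact (congrArg WithLp.snd (hw k)).trans (hb2 k)
  obtain ⟨F, hFn, hF⟩ := exists_seq w₁ w₂ (by
    intro x
    have h1 := WithLp.prod_norm_sq_eq_of_L2 (w x)
    have h2 := hwn x
    show ‖(w x).fst‖ ^ 2 + ‖(w x).snd‖ ^ 2 ≤ _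
    rw [← h1]
    gcongr)
  refine ⟨ι.toContinuousLinearMap ∘L X + J.toContinuousLinearMap ∘L F ∘L D, ?_, ?_, ?_⟩
  · intro k
    show ‖ι (X k) + J (F (D k))‖ ≤ ‖k‖
    refine (sq_le_sq₀ (norm_nonneg _) (norm_nonneg _)).1 ?_
    have h0 : inner ℂ (ι (X k)) (J (F (D k))) = 0 := by rw [hQ, hQJ, inner_zero_right]
    have h1 := norm_add_sq_eq_norm_sq_add_norm_sq_of_inner_eq_zero (𝕜 := ℂ) _ _ h0
    simp only [LinearIsometry.norm_map] at h1
    have h2 := hFn (D k)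
    have h3 := norm_nonneg (F (D k))
    have h4 := hD k
    nlinarith
  · intro k
    show ι (X (V k)) + J (F (D (V k))) = V (ι (X k) + J (F (D k)))
    have h1 : HasSum (fun i => V ((V ^ i) (F (D k) i : K))) (V (J (F (D k)))) :=
      V.toContinuousLinearMap.hasSum (hJs (F (D k)))
    have h2 : HasSum (fun i => (V ^ i) (F (D (V k)) i : K)) (V (J (F (D k))) + Lo (X k)) := by
      have h3 := (hasSum_nat_add_iff (f := fun i => (V ^ i) (F (D (V k)) i : K)) 1
        (g := V (J (F (D k))))).1 (by
          convert h1 using 2 with i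
          rw [hF, hF, pow_succ w₁, pow_succ' V]
          show V ((V ^ i) _) = V ((V ^ i) _)
          simp only [mul_apply_eq_comp]
          rw [hw1])
      simpa [hF, hw2, hL'] using h3
    rw [(hJs (F (D (V k)))).unique h2, hLo', hXV, map_add]
    abel
  · intro k
    show Q (ι (X k) + J (F (D k))) = S (Q k)
    rw [map_add, hQJ, hQι, add_zero]; rfl

/-- Direct sum of isometries. -/
noncomputable def dsum (V : K →ₗᵢ[ℂ] K) (U : R →ₗᵢ[ℂ] R) :
    WithLp 2 (K × R) →ₗᵢ[ℂ] WithLp 2 (K × R) where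
  toFun z := WithLp.toLp 2 (V z.fst, U z.snd)
  map_add' x y := by
    rw [← WithLp.toLp_add]; congr 1; ext <;> simp
  map_smul' c x := by
    rw [RingHom.id_apply, ← WithLp.toLp_smul]; congr 1; ext <;> simp
  norm_map' z := by
    refine (sq_eq_sq₀ (norm_nonneg _) (norm_nonneg _)).1 ?_
    simp [WithLp.prod_norm_sq_eq_of_L2]

theorem dsum_apply (V : K →ₗᵢ[ℂ] K) (U : R →ₗᵢ[ℂ] R) (z : WithLp 2 (K × R)) :
    dsum V U z = WithLp.toLp 2 (V z.fst, U z.snd) := rfl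

/-- Isometric lift of a contraction commuting with an isometry. -/
theorem isometric_lift (V : K →ₗᵢ[ℂ] K) (Y : K →L[ℂ] K) (hY : ∀ k, ‖Y k‖ ≤ ‖k‖)
    (hYV : ∀ k, Y (V k) = V (Y k)) :
    ∃ (R : Type) (_ : NormedAddCommGroup R) (_ : InnerProductSpace ℂ R) (_ : CompleteSpace R)
      (U : R →ₗᵢ[ℂ] R) (W : WithLp 2 (K × R) →ₗᵢ[ℂ] WithLp 2 (K × R)),
      (∀ z, W (dsum V U z) = dsum V U (W z)) ∧ ∀ z, (W z).fst = Y z.fst := by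
  obtain ⟨E, _, _, _, D, hDd, hD⟩ := exists_defect Y hY
  obtain ⟨u, hu⟩ := exists_isometry D (D ∘L V.toContinuousLinearMap) hDd (by
    intro k
    refine (sq_eq_sq₀ (norm_nonneg _) (norm_nonneg _)).1 ?_
    show ‖D (V k)‖ ^ 2 = _
    rw [hD, hD, hYV, V.norm_map, V.norm_map])
  have hu' : ∀ k, u (D k) = D (V k) := hu
  let W : WithLp 2 (K × l2 E) →ₗᵢ[ℂ] WithLp 2 (K × l2 E) :=
    { toFun := fun z => WithLp.toLp 2 (Y z.fst, l2cons (D z.fst, z.snd))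
      map_add' := fun x y => by
        show WithLp.toLp 2 (Y (x.fst + y.fst), l2cons (D (x.fst + y.fst), x.snd + y.snd)) =
          WithLp.toLp 2 (Y x.fst + Y y.fst, l2cons (D x.fst, x.snd) + l2cons (D y.fst, y.snd))
        rw [← map_add l2cons, Prod.mk_add_mk, map_add, map_add]
      map_smul' := fun c x => by
        show WithLp.toLp 2 (Y (c • x.fst), l2cons (D (c • x.fst), c • x.snd)) =
          WithLp.toLp 2 (c • Y x.fst, c • l2cons (D x.fst, x.snd))
        rw [← map_smul l2cons, Prod.smul_mk, map_smul, map_smul]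
      norm_map' := fun z => by
        refine (sq_eq_sq₀ (norm_nonneg _) (norm_nonneg _)).1 ?_
        rw [WithLp.prod_norm_sq_eq_of_L2, WithLp.prod_norm_sq_eq_of_L2]
        show ‖Y z.fst‖ ^ 2 + ‖l2cons (D z.fst, z.snd)‖ ^ 2 = _
        rw [l2cons_norm, hD]
        ring }
  refine ⟨l2 E, inferInstance, inferInstance, inferInstance, l2map u, W, fun z => ?_, fun z => rfl⟩
  show WithLp.toLp 2 (Y (V z.fst), l2cons (D (V z.fst), l2map u z.snd)) =
    WithLp.toLp 2 (V (Y z.fst), l2map u (l2cons (D z.fst, z.snd)))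
  rw [hYV]
  congr 2
  ext i
  cases i with
  | zero => simp [hu']
  | succ i => simp

end lift

/-- A finite nonempty subset of an acyclic graph has a vertex with at most one neighbour in it. -/
theorem exists_leaf {n : ℕ} (G : SimpleGraph (Fin n)) (hG : G.IsAcyclic) (s : Finset (Fin n))
    (hs : s.Nonempty) :
    ∃ v ∈ s, ∀ i ∈ s, ∀ j ∈ s, G.Adj v i → G.Adj v j → i = j := by
  classical
  set G' := G.induce (s : Set (Fin n)) with hG'
  have hac : G'.IsAcyclic := hG.induce _
  obtain ⟨v₀, hv₀⟩ := hs
  let c := G'.connectedComponentMk ⟨v₀, hv₀⟩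
  have ht : c.toSimpleGraph.IsTree := hac.isTree_connectedComponent c
  rcases subsingleton_or_nontrivial c with hsub | hnt
  · refine ⟨v₀, hv₀, fun i hi j hj hvi _ => ?_⟩
    exfalso
    have hadj : G'.Adj ⟨v₀, hv₀⟩ ⟨i, hi⟩ := hvi
    have hic : (⟨i, hi⟩ : (s : Set (Fin n))) ∈ c.supp :=
      SimpleGraph.ConnectedComponent.sound hadj.symm.reachable
    have := hsub.elim ⟨⟨v₀, hv₀⟩, rfl⟩ ⟨⟨i, hi⟩, hic⟩
    have h2 : v₀ = i := congrArg (fun z => z.1.1) this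
    exact hvi.ne h2
  · obtain ⟨v, hv⟩ := ht.exists_vert_degree_one_of_nontrivial
    rw [SimpleGraph.degree_eq_one_iff_existsUnique_adj] at hv
    refine ⟨v.1.1, v.1.2, fun i hi j hj hvi hvj => ?_⟩
    have key : ∀ i (hi : i ∈ s), G.Adj v.1.1 i → (⟨i, hi⟩ : (s : Set (Fin n))) ∈ c.supp := by
      intro i hi h
      have hadj : G'.Adj v.1 ⟨i, hi⟩ := h
      have := v.2
      exact (SimpleGraph.ConnectedComponent.sound hadj.symm.reachable).trans this
    have := hv.unique (y₁ := ⟨⟨i, hi⟩, key i hi hvi⟩) (y₂ := ⟨⟨j, hj⟩, key j hj hvj⟩) hvi hvj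
    simpa using this

section main
variable {H : Type} [NormedAddCommGroup H] [InnerProductSpace ℂ H] [CompleteSpace H]

theorem main_aux {n : ℕ} (G : SimpleGraph (Fin n)) (hG : G.IsAcyclic)
    (T : Fin n → H →L[ℂ] H) (hT : ∀ j x, ‖T j x‖ ≤ ‖x‖)
    (hcomm : ∀ i j, G.Adj i j → ∀ x, T i (T j x) = T j (T i x)) (m : ℕ) :
    ∀ s : Finset (Fin n), s.card = m →
    ∃ (K : Type) (_ : NormedAddCommGroup K) (_ : InnerProductSpace ℂ K) (_ : CompleteSpace K)
      (ι : H →ₗᵢ[ℂ] K) (Q : K →L[ℂ] H) (V : Fin n → K →ₗᵢ[ℂ] K),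
      (∀ x k, inner ℂ (ι x) k = inner ℂ x (Q k)) ∧
      (∀ i ∈ s, ∀ j ∈ s, G.Adj i j → ∀ k, V i (V j k) = V j (V i k)) ∧
      (∀ j ∈ s, ∀ k, Q (V j k) = T j (Q k)) := by
  classical
  induction m with
  | zero =>
    intro s hs
    rw [Finset.card_eq_zero] at hs
    subst hs
    exact ⟨H, inferInstance, inferInstance, inferInstance, LinearIsometry.id,
      ContinuousLinearMap.id ℂ H, fun _ => LinearIsometry.id, by simp, by simp, by simp⟩
  | succ m ih =>
    intro s hs
    obtain ⟨v, hvs, hleaf⟩ := exists_leaf G hG s (Finset.card_pos.1 (by omega))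
    obtain ⟨K, _, _, _, ι, Q, V, hQ, hVc, hVl⟩ := ih (s.erase v) (by
      rw [Finset.card_erase_of_mem hvs, hs]; rfl)
    -- the isometry with which the new one has to commute
    obtain ⟨V₀, T₀, hl₀, hc₀, hV₀⟩ : ∃ (V₀ : K →ₗᵢ[ℂ] K) (T₀ : H →L[ℂ] H),
        (∀ k, Q (V₀ k) = T₀ (Q k)) ∧ (∀ x, T₀ (T v x) = T v (T₀ x)) ∧
        ∀ j ∈ s, G.Adj v j → V j = V₀ := by
      by_cases h : ∃ w ∈ s, G.Adj v w
      · obtain ⟨w, hw, hvw⟩ := h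
        refine ⟨V w, T w, hVl w (Finset.mem_erase.2 ⟨hvw.ne', hw⟩), hcomm w v hvw.symm, ?_⟩
        intro j hj hvj
        rw [hleaf j hj w hw hvj hvw]
      · push Not at h
        exact ⟨LinearIsometry.id, ContinuousLinearMap.id ℂ H, fun k => rfl, fun x => rfl,
          fun j hj hvj => absurd hvj (h j hj)⟩
    obtain ⟨Y, hYn, hYV, hYQ⟩ := commutant_lift ι Q hQ V₀ T₀ (T v) hl₀ hc₀ (hT v)
    obtain ⟨R, _, _, _, U, W, hWc, hWf⟩ := isometric_lift V₀ Y hYn hYV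
    let ι' : H →ₗᵢ[ℂ] WithLp 2 (K × R) :=
      { toFun := fun x => WithLp.toLp 2 (ι x, 0)
        map_add' := fun x y => by rw [← WithLp.toLp_add]; simp
        map_smul' := fun c x => by rw [RingHom.id_apply, ← WithLp.toLp_smul]; simp
        norm_map' := fun x => by
          refine (sq_eq_sq₀ (norm_nonneg _) (norm_nonneg _)).1 ?_
          simp [WithLp.prod_norm_sq_eq_of_L2] }
    let UU : Fin n → R →ₗᵢ[ℂ] R := fun j => if G.Adj v j then U else LinearIsometry.id
    have hUU : ∀ i ∈ s, ∀ j ∈ s, ∀ r, UU i (UU j r) = UU j (UU i r) := by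
      intro i hi j hj r
      by_cases h1 : G.Adj v i <;> by_cases h2 : G.Adj v j <;> simp [UU, h1, h2]
    let V' : Fin n → WithLp 2 (K × R) →ₗᵢ[ℂ] WithLp 2 (K × R) :=
      fun j => if j = v then W else dsum (V j) (UU j)
    have hV'v : V' v = W := if_pos rfl
    have hV'j : ∀ j, j ≠ v → V' j = dsum (V j) (UU j) := fun j hj => if_neg hj
    have hV'a : ∀ j ∈ s, G.Adj v j → V' j = dsum V₀ U := by
      intro j hj hvj
      rw [hV'j j hvj.ne', hV₀ j hj hvj]
      simp [UU, hvj]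
    refine ⟨WithLp 2 (K × R), inferInstance, inferInstance, inferInstance, ι',
      Q ∘L WithLp.fstL 2 ℂ K R, V', ?_, ?_, ?_⟩
    · intro x z
      show inner ℂ (WithLp.toLp 2 (ι x, (0 : R))) z = inner ℂ x (Q z.fst)
      rw [WithLp.prod_inner_apply, ← hQ]
      simp
    · intro i hi j hj hij z
      by_cases h1 : i = v
      · subst h1
        rw [hV'v, hV'a j hj hij, hWc]
      · by_cases h2 : j = v
        · subst h2
          rw [hV'v, hV'a i hi hij.symm, hWc]
        · rw [hV'j i h1, hV'j j h2]
          simp only [dsum_apply]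
          show WithLp.toLp 2 (V i (V j z.fst), UU i (UU j z.snd)) =
            WithLp.toLp 2 (V j (V i z.fst), UU j (UU i z.snd))
          rw [hUU i hi j hj, hVc i (Finset.mem_erase.2 ⟨h1, hi⟩) j (Finset.mem_erase.2 ⟨h2, hj⟩) hij]
    · intro j hj z
      show Q (V' j z).fst = T j (Q z.fst)
      by_cases h : j = v
      · subst h
        rw [hV'v, hWf, hYQ]
      · rw [hV'j j h]
        exact hVl j (Finset.mem_erase.2 ⟨h, hj⟩) z.fst

end main
end GCE

/-- Lemma 2.2: if `G` is an acyclic graph on `{1, …, n}` and `A₁, …, Aₙ` are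
contractions on `H` commuting according to `G`, then there is a Hilbert space
`K ⊇ H` and co-isometries `X₁, …, Xₙ` on `K` commuting according to `G` such
that `Xⱼ` extends `Aⱼ` for each `j`. -/
theorem acyclic_coisometric_extension {n : ℕ} {H : Type}
    [NormedAddCommGroup H] [InnerProductSpace ℂ H] [CompleteSpace H]
    (G : SimpleGraph (Fin n)) (hG : G.IsAcyclic)
    (A : Fin n → H →L[ℂ] H) (hA : ∀ j, ‖A j‖ ≤ 1)
    (hcomm : ∀ i j, G.Adj i j → A i ∘L A j = A j ∘L A i) :
    Nonempty (GraphCoisometricExtension G A) := by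
  obtain ⟨K, _, _, _, ι, Q, V, hQ, hVc, hVl⟩ := GCE.main_aux G hG (fun j => adjoint (A j))
    (fun j x => by
      refine ((adjoint (A j)).le_opNorm x).trans ?_
      rw [LinearIsometryEquiv.norm_map]
      exact mul_le_of_le_one_left (norm_nonneg _) (hA j))
    (fun i j hij x => by
      have h := congrArg adjoint (hcomm i j hij)
      rw [adjoint_comp, adjoint_comp] at h
      exact (DFunLike.congr_fun h x).symm) _ Finset.univ rfl
  have hVV : ∀ j, adjoint (V j).toContinuousLinearMap ∘L (V j).toContinuousLinearMap = 1 := by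
    intro j
    ext k
    refine ext_inner_left ℂ fun y => ?_
    rw [comp_apply, adjoint_inner_right]
    exact (V j).inner_map_map y k
  refine ⟨⟨K, ι, fun j => adjoint (V j).toContinuousLinearMap, ?_, ?_, ?_⟩⟩
  · intro j
    rw [adjoint_adjoint]
    exact hVV j
  · intro i j hij
    rw [← adjoint_comp, ← adjoint_comp]
    congr 1
    ext k
    exact (hVc i (Finset.mem_univ _) j (Finset.mem_univ _) hij k).symm
  · intro j x
    refine ext_inner_right ℂ fun k => ?_
    rw [adjoint_inner_left, hQ, hQ]
    show inner ℂ x (Q (V j k)) = _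
    rw [hVl j (Finset.mem_univ _), adjoint_inner_right]
end

section
/- (Lemma 2.2, isometric version) Let G be an acyclic graph on {1,...,n} and A₁,...,Aₙ ∈ B(H) isometries commuting according to G. Then there exists K ⊇ H and unitaries X₁,...,Xₙ ∈ B(K) commuting according to G with Xⱼ extending Aⱼ for each j. -/
open ContinuousLinearMap

/-- Data witnessing the isometric version of Lemma 2.2: a Hilbert space `K ⊇ H` and
unitaries `X₁, …, Xₙ` on `K` commuting according to the graph `G` such that
`Xⱼ` extends `Aⱼ` for each `j`. -/
structure GraphUnitaryExtension {n : ℕ} {H : Type}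
    [NormedAddCommGroup H] [InnerProductSpace ℂ H] [CompleteSpace H]
    (G : SimpleGraph (Fin n)) (A : Fin n → H →L[ℂ] H) where
  K : Type
  [grp : NormedAddCommGroup K]
  [ips : InnerProductSpace ℂ K]
  [cpl : CompleteSpace K]
  emb : H →ₗᵢ[ℂ] K
  X : Fin n → K →L[ℂ] K
  unitary_right : ∀ j, X j ∘L ContinuousLinearMap.adjoint (X j) = 1
  unitary_left : ∀ j, ContinuousLinearMap.adjoint (X j) ∘L X j = 1
  commute : ∀ i j, G.Adj i j → X i ∘L X j = X j ∘L X i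
  extend : ∀ (j) (x : H), X j (emb x) = emb (A j x)

open Filter Topology

namespace AcycUnitary

lemma exists_leaf {V : Type} (G : SimpleGraph V) (hG : G.IsAcyclic) (s : Finset V)
    (hs : s.Nonempty) :
    ∃ v ∈ s, ∀ a ∈ s, ∀ b ∈ s, G.Adj v a → G.Adj v b → a = b := by
  classical
  obtain ⟨w, hw⟩ := hs
  let G' := G.induce (s : Set V)
  have hG' : G'.IsAcyclic := hG.induce _
  let c := G'.connectedComponentMk ⟨w, hw⟩
  have ht := hG'.isTree_connectedComponent c
  have hwc : (⟨w, hw⟩ : (s : Set V)) ∈ c.supp := rfl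
  have key : ∃ v : c.supp, ∀ a b : c.supp, c.toSimpleGraph.Adj v a → c.toSimpleGraph.Adj v b →
      a = b := by
    rcases subsingleton_or_nontrivial c.supp with h | h
    · exact ⟨⟨_, hwc⟩, fun a b _ _ => Subsingleton.elim _ _⟩
    · have : Fintype c.supp := Fintype.ofFinite _
      obtain ⟨v, hv⟩ := ht.exists_vert_degree_one_of_nontrivial
      rw [SimpleGraph.degree_eq_one_iff_existsUnique_adj] at hv
      exact ⟨v, fun a b ha hb => hv.unique ha hb⟩
  obtain ⟨⟨⟨v, hvs⟩, hvc⟩, hv⟩ := key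
  refine ⟨v, hvs, fun a ha b hb hva hvb => ?_⟩
  have mem : ∀ a (ha : a ∈ s), G.Adj v a → (⟨a, ha⟩ : (s : Set V)) ∈ c.supp := by
    intro a ha hva
    have h1 : G'.Adj ⟨v, hvs⟩ ⟨a, ha⟩ := hva
    rw [SimpleGraph.ConnectedComponent.mem_supp_iff] at hvc ⊢
    rw [← hvc]
    exact (SimpleGraph.ConnectedComponent.sound h1.reachable).symm
  have := hv ⟨⟨a, ha⟩, mem a ha hva⟩ ⟨⟨b, hb⟩, mem b hb hvb⟩ hva hvb
  simpa using this

variable {H K : Type} [NormedAddCommGroup H] [InnerProductSpace ℂ H] [CompleteSpace H]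
  [NormedAddCommGroup K] [InnerProductSpace ℂ K] [CompleteSpace K]

/-- the adjoint of an isometry -/
noncomputable def adj (f : H →ₗᵢ[ℂ] K) : K →L[ℂ] H := ContinuousLinearMap.adjoint f.toContinuousLinearMap

lemma adj_inner (f : H →ₗᵢ[ℂ] K) (x : H) (y : K) : inner ℂ (adj f y) x = inner ℂ y (f x) :=
  ContinuousLinearMap.adjoint_inner_left f.toContinuousLinearMap x y

lemma adj_apply (f : H →ₗᵢ[ℂ] K) (x : H) : adj f (f x) = x := by
  refine ext_inner_right ℂ fun y => ?_
  rw [adj_inner, f.inner_map_map]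

lemma inner_sub_adj (f : H →ₗᵢ[ℂ] K) (x : H) (y : K) :
    inner ℂ (f x) (y - f (adj f y)) = 0 := by
  rw [← inner_conj_symm, inner_sub_left, f.inner_map_map, adj_inner]
  simp

lemma norm_sq_split (f : H →ₗᵢ[ℂ] K) (x : H) (y : K) :
    ‖f x + (y - f (adj f y))‖ ^ 2 = ‖x‖ ^ 2 + ‖y - f (adj f y)‖ ^ 2 := by
  have := norm_add_sq_eq_norm_sq_add_norm_sq_of_inner_eq_zero _ _ (inner_sub_adj f x y)
  rw [f.norm_map] at this
  simpa [sq] using this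

lemma norm_sq_split' (f : H →ₗᵢ[ℂ] K) (y : K) :
    ‖y‖ ^ 2 = ‖adj f y‖ ^ 2 + ‖y - f (adj f y)‖ ^ 2 := by
  rw [← norm_sq_split f (adj f y) y]
  simp

/-- extend an isometry by the identity on the complement -/
noncomputable def ext0 (f : H →ₗᵢ[ℂ] K) (A : H →ₗᵢ[ℂ] H) : K →ₗᵢ[ℂ] K where
  toLinearMap := f.toLinearMap ∘ₗ A.toLinearMap ∘ₗ (adj f).toLinearMap
    + (LinearMap.id - f.toLinearMap ∘ₗ (adj f).toLinearMap)
  norm_map' y := by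
    have h := norm_sq_split f (A (adj f y)) y
    rw [A.norm_map, ← norm_sq_split'] at h
    exact (sq_eq_sq₀ (norm_nonneg _) (norm_nonneg _)).1 h

lemma ext0_apply (f : H →ₗᵢ[ℂ] K) (A : H →ₗᵢ[ℂ] H) (y : K) :
    ext0 f A y = f (A (adj f y)) + (y - f (adj f y)) := rfl

lemma ext0_emb (f : H →ₗᵢ[ℂ] K) (A : H →ₗᵢ[ℂ] H) (x : H) : ext0 f A (f x) = f (A x) := by
  simp [ext0_apply, adj_apply]

lemma exists_lift (W : K ≃ₗᵢ[ℂ] K) (f : H →ₗᵢ[ℂ] K) (B A : H →ₗᵢ[ℂ] H)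
    (hW : ∀ x, W (f x) = f (B x)) (hAB : ∀ x, A (B x) = B (A x)) :
    ∃ C : K →ₗᵢ[ℂ] K, (∀ x, C (W x) = W (C x)) ∧ ∀ x, C (f x) = f (A x) := by
  let F : ℕ → K →ₗᵢ[ℂ] K := fun n =>
    (W ^ n).symm.toLinearIsometry.comp ((ext0 f A).comp (W ^ n).toLinearIsometry)
  have F_apply : ∀ n x, F n x = (W ^ n).symm (ext0 f A ((W ^ n) x)) := fun n x => rfl
  have Wsucc : ∀ n x, (W ^ (n + 1)) x = (W ^ n) (W x) := fun n x => by
    rw [pow_succ]; rfl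
  have Wadd : ∀ n m x, (W ^ (n + m)) x = (W ^ n) ((W ^ m) x) := fun n m x => by
    rw [pow_add]; rfl
  have Wf : ∀ n x, (W ^ n) (f x) = f (B^[n] x) := by
    intro n
    induction n with
    | zero => intro x; rfl
    | succ n ih => intro x; rw [Wsucc, hW, ih]; rfl
  have AB : ∀ n x, A (B^[n] x) = B^[n] (A x) := by
    intro n
    induction n with
    | zero => intro x; rfl
    | succ n ih => intro x; rw [Function.iterate_succ_apply, ih, hAB]; rfl
  have F_const : ∀ m n h, F (n + m) ((W ^ m).symm (f h)) = (W ^ m).symm (f (A h)) := by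
    intro m n h
    rw [F_apply, LinearIsometryEquiv.symm_apply_eq, Wadd, Wadd]
    rw [LinearIsometryEquiv.apply_symm_apply, LinearIsometryEquiv.apply_symm_apply, Wf, ext0_emb,
      AB, Wf]
  let S : Submodule ℂ K :=
    { carrier := {x | CauchySeq fun n => F n x}
      add_mem' := by
        intro a b ha hb
        simpa using! CauchySeq.add ha hb
      zero_mem' := by
        simpa using! cauchySeq_const (0 : K)
      smul_mem' := by
        intro c x hx
        simpa using! (uniformContinuous_const_smul c).comp_cauchySeq hx }
  have S_mem : ∀ x, x ∈ S ↔ CauchySeq fun n => F n x := fun x => Iff.rfl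
  have S_closed : IsClosed (S : Set K) := by
    refine isClosed_of_closure_subset fun x hx => ?_
    change CauchySeq fun n => F n x
    rw [Metric.cauchySeq_iff]
    intro ε hε
    obtain ⟨y, hy, hxy⟩ := Metric.mem_closure_iff.1 hx (ε / 3) (by positivity)
    obtain ⟨N, hN⟩ := Metric.cauchySeq_iff.1 hy (ε / 3) (by positivity)
    refine ⟨N, fun m hm n hn => ?_⟩
    have h1 := hN m hm n hn
    have h2 : dist (F m x) (F m y) = dist x y := (F m).dist_map x y
    have h3 : dist (F n y) (F n x) = dist x y := by rw [(F n).dist_map, dist_comm]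
    have h4 := dist_triangle4 (F m x) (F m y) (F n y) (F n x)
    linarith
  have S_top : S = ⊤ := by
    have : CompleteSpace S := S_closed.completeSpace_coe
    rw [← Submodule.orthogonal_eq_bot_iff, eq_bot_iff]
    intro x hx
    have hxS : x ∈ S := by
      rw [S_mem]
      have : ∀ n, F n x = x := by
        intro n
        have h0 : adj f ((W ^ n) x) = 0 := by
          refine ext_inner_right ℂ fun h => ?_
          rw [adj_inner, inner_zero_left]
          have hm : (W ^ n).symm (f h) ∈ S := by
            rw [S_mem]
            refine Tendsto.cauchySeq (x := (W ^ n).symm (f (A h))) ?_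
            refine tendsto_const_nhds.congr' ?_
            filter_upwards [eventually_ge_atTop n] with k hk
            obtain ⟨j, rfl⟩ := Nat.exists_eq_add_of_le' hk
            rw [F_const]
          have := (Submodule.mem_orthogonal' _ _).1 hx _ hm
          rw [← (W ^ n).inner_map_map] at this
          simpa using this
        rw [F_apply, ext0_apply, h0]
        simp
      simpa [this] using cauchySeq_const x
    have := (Submodule.mem_orthogonal' _ _).1 hx _ hxS
    simpa using this
  have conv : ∀ x, ∃ y, Tendsto (fun n => F n x) atTop (𝓝 y) := fun x =>
    cauchySeq_tendsto_of_complete ((S_mem x).1 (S_top ▸ Submodule.mem_top))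
  choose C hC using conv
  refine ⟨{ toFun := C, map_add' := ?_, map_smul' := ?_, norm_map' := ?_ }, ?_, ?_⟩
  · intro x y
    refine tendsto_nhds_unique (hC (x + y)) ?_
    simpa using (hC x).add (hC y)
  · intro c x
    refine tendsto_nhds_unique (hC (c • x)) ?_
    simpa using (hC x).const_smul c
  · intro x
    refine tendsto_nhds_unique (hC x).norm ?_
    simp
  · intro x
    change C (W x) = W (C x)
    refine tendsto_nhds_unique (hC (W x)) ?_
    have h := (W.continuous.tendsto _).comp ((tendsto_add_atTop_iff_nat 1).2 (hC x))
    refine h.congr fun n => ?_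
    simp only [Function.comp]
    rw [F_apply, F_apply, eq_comm, LinearIsometryEquiv.symm_apply_eq, ← Wsucc, ← Wsucc,
      LinearIsometryEquiv.apply_symm_apply]
  · intro x
    change C (f x) = f (A x)
    refine tendsto_nhds_unique (hC (f x)) ?_
    refine tendsto_const_nhds.congr fun n => ?_
    have := F_const 0 n x
    exact this.symm

lemma adj_comm (C : K →ₗᵢ[ℂ] K) (W : K ≃ₗᵢ[ℂ] K) (h : ∀ x, C (W x) = W (C x)) (y : K) :
    adj C (W y) = W (adj C y) := by
  refine ext_inner_right ℂ fun x => ?_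
  obtain ⟨z, rfl⟩ := W.surjective x
  rw [adj_inner, h, W.inner_map_map, W.inner_map_map, adj_inner]

/-- Halmos unitary extension of an isometry -/
noncomputable def halmos (C : K →ₗᵢ[ℂ] K) : WithLp 2 (K × K) ≃ₗᵢ[ℂ] WithLp 2 (K × K) where
  toFun p := WithLp.toLp 2 (C p.fst + (p.snd - C (adj C p.snd)), adj C p.snd)
  invFun p := WithLp.toLp 2 (adj C p.fst, C p.snd + (p.fst - C (adj C p.fst)))
  map_add' p q := by
    apply (WithLp.equiv 2 (K × K)).injective
    ext <;> simp
    abel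
  map_smul' c p := by
    apply (WithLp.equiv 2 (K × K)).injective
    ext <;> simp [smul_add, smul_sub]
  left_inv p := by
    apply (WithLp.equiv 2 (K × K)).injective
    ext <;> simp [adj_apply]
  right_inv p := by
    apply (WithLp.equiv 2 (K × K)).injective
    ext <;> simp [adj_apply]
  norm_map' p := by
    refine (sq_eq_sq₀ (norm_nonneg _) (norm_nonneg _)).1 ?_
    rw [WithLp.prod_norm_sq_eq_of_L2, WithLp.prod_norm_sq_eq_of_L2]
    change ‖C p.fst + (p.snd - C (adj C p.snd))‖ ^ 2 + ‖adj C p.snd‖ ^ 2 = _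
    rw [norm_sq_split, norm_sq_split' C p.snd]
    ring

lemma halmos_apply (C : K →ₗᵢ[ℂ] K) (p : WithLp 2 (K × K)) :
    halmos C p = WithLp.toLp 2 (C p.fst + (p.snd - C (adj C p.snd)), adj C p.snd) := rfl

/-- `W ⊕ W` -/
noncomputable def dbl (W : K ≃ₗᵢ[ℂ] K) : WithLp 2 (K × K) ≃ₗᵢ[ℂ] WithLp 2 (K × K) :=
  LinearIsometryEquiv.withLpProdCongr 2 W W

lemma dbl_apply (W : K ≃ₗᵢ[ℂ] K) (p : WithLp 2 (K × K)) :
    dbl W p = WithLp.toLp 2 (W p.fst, W p.snd) := rfl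

lemma halmos_comm (C : K →ₗᵢ[ℂ] K) (W : K ≃ₗᵢ[ℂ] K) (h : ∀ x, C (W x) = W (C x))
    (p : WithLp 2 (K × K)) : halmos C (dbl W p) = dbl W (halmos C p) := by
  simp [halmos_apply, dbl_apply, adj_comm C W h, h]

/-- inclusion in the first summand -/
noncomputable def incl : K →ₗᵢ[ℂ] WithLp 2 (K × K) where
  toFun x := WithLp.toLp 2 (x, 0)
  map_add' x y := by
    apply (WithLp.equiv 2 (K × K)).injective
    ext <;> simp
  map_smul' c x := by
    apply (WithLp.equiv 2 (K × K)).injective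
    ext <;> simp
  norm_map' x := by simp

lemma incl_apply (x : K) : incl x = WithLp.toLp 2 (x, (0 : K)) := rfl

lemma main_aux {n : ℕ} (G : SimpleGraph (Fin n)) (hG : G.IsAcyclic) (A : Fin n → H →ₗᵢ[ℂ] H)
    (hA : ∀ i j, G.Adj i j → ∀ x, A i (A j x) = A j (A i x)) (s : Finset (Fin n)) :
    ∃ (K : Type) (_ : NormedAddCommGroup K) (_ : InnerProductSpace ℂ K) (_ : CompleteSpace K)
      (f : H →ₗᵢ[ℂ] K) (X : Fin n → K ≃ₗᵢ[ℂ] K),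
      (∀ i ∈ s, ∀ j ∈ s, G.Adj i j → ∀ x, X i (X j x) = X j (X i x)) ∧
      ∀ j ∈ s, ∀ x, X j (f x) = f (A j x) := by
  induction s using Finset.strongInduction with
  | H s ih =>
    rcases s.eq_empty_or_nonempty with rfl | hs
    · exact ⟨H, inferInstance, inferInstance, inferInstance, LinearIsometry.id,
        fun _ => LinearIsometryEquiv.refl ℂ H, by simp, by simp⟩
    obtain ⟨v, hv, hleaf⟩ := exists_leaf G hG s hs
    obtain ⟨K, _, _, _, f, X, hX, hf⟩ := ih _ (Finset.erase_ssubset hv)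
    have hC : ∃ C : K →ₗᵢ[ℂ] K, (∀ u ∈ s, G.Adj v u → ∀ x, C (X u x) = X u (C x)) ∧
        ∀ x, C (f x) = f (A v x) := by
      by_cases hu : ∃ u ∈ s, G.Adj v u
      · obtain ⟨u, hus, hvu⟩ := hu
        obtain ⟨C, h1, h2⟩ := exists_lift (X u) f (A u) (A v)
          (hf u (Finset.mem_erase.2 ⟨hvu.ne', hus⟩)) (hA v u hvu)
        refine ⟨C, fun u' hu' hvu' => ?_, h2⟩
        rw [hleaf u' hu' u hus hvu' hvu]
        exact h1
      · exact ⟨ext0 f (A v), fun u hus hvu => absurd ⟨u, hus, hvu⟩ hu, ext0_emb f (A v)⟩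
    obtain ⟨C, hC1, hC2⟩ := hC
    refine ⟨WithLp 2 (K × K), inferInstance, inferInstance, inferInstance, incl.comp f,
      fun j => if j = v then halmos C else dbl (X j), ?_, ?_⟩
    · intro i hi j hj hij x
      by_cases hiv : i = v
      · subst hiv
        have hji : j ≠ i := hij.ne'
        simp only [if_true, if_neg hji]
        exact halmos_comm C (X j) (hC1 j hj hij) x
      · by_cases hjv : j = v
        · subst hjv
          simp only [if_true, if_neg hiv]
          exact (halmos_comm C (X i) (hC1 i hi hij.symm) x).symm
        · simp only [if_neg hiv, if_neg hjv, dbl_apply]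
          have := hX i (Finset.mem_erase.2 ⟨hiv, hi⟩) j (Finset.mem_erase.2 ⟨hjv, hj⟩) hij
          simp [this]
    · intro j hj x
      by_cases hjv : j = v
      · subst hjv
        simp [halmos_apply, incl_apply, hC2]
      · have := hf j (Finset.mem_erase.2 ⟨hjv, hj⟩) x
        simp [hjv, dbl_apply, incl_apply, this]

end AcycUnitary

/-- Lemma 2.2, isometric version: if `G` is an acyclic graph on `{1, …, n}` and
`A₁, …, Aₙ` are isometries on `H` commuting according to `G`, then there is a
Hilbert space `K ⊇ H` and unitaries `X₁, …, Xₙ` on `K` commuting according to `G`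
such that `Xⱼ` extends `Aⱼ` for each `j`. -/
theorem acyclic_unitary_extension_of_isometries {n : ℕ} {H : Type}
    [NormedAddCommGroup H] [InnerProductSpace ℂ H] [CompleteSpace H]
    (G : SimpleGraph (Fin n)) (hG : G.IsAcyclic)
    (A : Fin n → H →L[ℂ] H)
    (hA : ∀ j, ContinuousLinearMap.adjoint (A j) ∘L A j = 1)
    (hcomm : ∀ i j, G.Adj i j → A i ∘L A j = A j ∘L A i) :
    Nonempty (GraphUnitaryExtension G A) := by
  have hn : ∀ j x, ‖A j x‖ = ‖x‖ := fun j =>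
    (ContinuousLinearMap.norm_map_iff_adjoint_comp_self (A j)).2 (hA j)
  obtain ⟨K, _, _, _, f, X, hX, hf⟩ := AcycUnitary.main_aux G hG
    (fun j => (⟨(A j).toLinearMap, hn j⟩ : H →ₗᵢ[ℂ] H))
    (fun i j hij x => congrArg (fun T : H →L[ℂ] H => T x) (hcomm i j hij)) Finset.univ
  have h1 : ∀ j, ContinuousLinearMap.adjoint ((X j : K →L[ℂ] K)) ∘L (X j : K →L[ℂ] K) = 1 :=
    fun j => (ContinuousLinearMap.norm_map_iff_adjoint_comp_self _).1 (X j).norm_map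
  refine ⟨{ K := K, emb := f, X := fun j => (X j : K →L[ℂ] K), unitary_right := ?_,
            unitary_left := h1, commute := ?_, extend := ?_ }⟩
  · intro j
    ext y
    obtain ⟨z, rfl⟩ := (X j).surjective y
    have := congrArg (fun T : K →L[ℂ] K => X j (T z)) (h1 j)
    exact this
  · intro i j hij
    ext x
    exact hX i (Finset.mem_univ _) j (Finset.mem_univ _) hij x
  · intro j x
    exact hf j (Finset.mem_univ _) x
end
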